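/- arXiv:2604.06122 — 2 statements merged into one kernel-verified Lean document; each statement's English description precedes it below -/
import Mathlib

section
/- Assume Assumption 1 holds and fix m ∈ (−1,1) and a deterministic c ∈ (0,γ). Let ã ∈ (0,ς) and λ̃ > 0 be the (unique) solutions of G*(ã) = c and G'(λ̃) = ã. Let (C_n)_{n∈ℕ} be a sequence of h-measurable random variables such that C_n(h) ∈ (0, Γ_n(h)) eventually P_h-almost surely and C_n(h)/n → c P_h-almost surely. Then there exists a sequence of h-measurable random variables (A_n)_{n∈ℕ} such that, P_h-almost surely, the measure kernels K_n(h,·) defined by K_n(h,U) = e^{C_n(h)} P_σ({σ : H_n(h,σ) − A_n(h) ∈ U}) for Borel sets U converge vaguely to the deterministic measure D_λ̃(dx) = e^{−λ̃x}dx; that is, P_h-almost surely, for every continuous compactly supported f : ℝ → ℝ, ∫_ℝ f(x) K_n(h,dx) → ∫_ℝ f(x) e^{−λ̃x} dx. -/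
open MeasureTheory ProbabilityTheory Real Filter Set
open scoped ENNReal Topology BigOperators

noncomputable section

/-- Assumption 1 of the paper, phrased for the law `μ` of `h₁`. -/
structure Assumption1 (μ : Measure ℝ) : Prop where
  isProb : IsProbabilityMeasure μ
  acPart : ¬ μ.MutuallySingular (volume : Measure ℝ)
  smallBall : ∃ ε > (0:ℝ), ∃ p₁ > (0:ℝ), ∀ t ∈ Set.Ico (0:ℝ) ε,
    (μ {x : ℝ | |x| < t}).toReal ≤ p₁ * t
  densityLB : ∃ c d p₂ : ℝ, c < d ∧ 0 < p₂ ∧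
    ∀ s : Set ℝ, s ⊆ Set.Icc c d → MeasurableSet s →
      ENNReal.ofReal p₂ * volume s ≤ μ s
  intAbs : Integrable (fun x : ℝ => |x|) μ
  intSq : Integrable (fun x : ℝ => x ^ 2) μ
  intCube : Integrable (fun x : ℝ => |x| ^ 3) μ

/-- `g(λ) = log(((1+m)/2)e^{λ(1−m)} + ((1−m)/2)e^{−λ(1+m)})`. -/
def gfun (m lam : ℝ) : ℝ :=
  Real.log ((1 + m) / 2 * Real.exp (lam * (1 - m)) + (1 - m) / 2 * Real.exp (-(lam * (1 + m))))

/-- `G(λ) = E[g(λ h₁)]`. -/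
def Gf (μ : Measure ℝ) (m lam : ℝ) : ℝ := ∫ x, gfun m (lam * x) ∂μ

/-- `G*(a) = sup_{λ∈ℝ}(λa − G(λ))`. -/
def Gstar (μ : Measure ℝ) (m a : ℝ) : ℝ := ⨆ lam : ℝ, (lam * a - Gf μ m lam)

/-- `ς = −m ψ₁ + ψ₃`. -/
def sigmaBar (μ : Measure ℝ) (m : ℝ) : ℝ := -m * ∫ x, x ∂μ + ∫ x, |x| ∂μ

/-- `γ = −E[log(1 + sign(h₁)m)] + log 2`. -/
def gammaBar (μ : Measure ℝ) (m : ℝ) : ℝ :=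
  -(∫ x, Real.log (1 + Real.sign x * m) ∂μ) + Real.log 2

/-- `Γ_n(h) = −Σ_{i=1}^n log(1 + sign(h_i) m) + n log 2`. -/
def GammaN (m : ℝ) (n : ℕ) (hs : ℕ → ℝ) : ℝ :=
  -(∑ i ∈ Finset.range n, Real.log (1 + Real.sign (hs i) * m)) + n * Real.log 2

/-- The spin value attached to a Boolean: `true ↦ 1`, `false ↦ -1`. -/
def spin (b : Bool) : ℝ := if b then 1 else -1

/-- `H_n(h,τ) = Σ_{i=1}^n h_i (τ_i − m)`. -/
def Hn (m : ℝ) (n : ℕ) (hs : ℕ → ℝ) (τ : Fin n → Bool) : ℝ :=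
  ∑ i : Fin n, hs i * (spin (τ i) - m)

/-- The `P_σ`-weight of the cylinder `[τ]`: `∏_{i=1}^n (1+mτ_i)/2`. -/
def Pcyl (m : ℝ) (n : ℕ) (τ : Fin n → Bool) : ℝ :=
  ∏ i : Fin n, (1 + m * spin (τ i)) / 2

/-!
Tilting the law of `σ i` by `exp (λ * h i * σ i)` turns the spins into independent spins of means
`tiltMean m (λ * h i)`, and the relative entropy of the tilted law of `(σ 1, …, σ n)` is
`∑ i < n, tiltEntropy m (λ * h i)`. This sum increases with `λ ≥ 0`, and by the law of large
numbers it is asymptotic to `n * G*(G'(λ))`, so for large `n` it takes the value `C n` at some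
`Λ n`, and `Λ n → ltil`. Undoing the tilt by `Λ n` turns a local limit theorem for the tilted
spins, whose limit is Lebesgue measure, into the claim: the factor `exp (C n)`, the normalization
by the standard deviation and the log-partition function are absorbed in the centering `A n`, which
stays within `O(log n)` of the tilted mean.

The local limit theorem is proved by Fourier inversion against the Fejér kernel, which has compactly
supported Fourier transform. The characteristic function is approximated by a Gaussian near the
origin and is exponentially small away from it, because the law of `h 1` is not carried by a
lattice.
-/

section TiltedSpin

/-- The partition function `∑ s = ±1, (1 + m s) / 2 * exp (x s)` of one spin in the field `x`. -/
def tiltZ (m x : ℝ) : ℝ := cosh x + m * sinh x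

/-- The mean of a spin of prior mean `m` exponentially tilted by the field `x`; its variance is
`1 - tiltMean m x ^ 2`. -/
def tiltMean (m x : ℝ) : ℝ := (sinh x + m * cosh x) / tiltZ m x

/-- The relative entropy of the spin tilted by the field `x` with respect to the prior spin,
written as the Legendre transform of `gfun m` at the slope attained at `x`. -/
def tiltEntropy (m x : ℝ) : ℝ := x * (tiltMean m x - m) - gfun m x

variable {m : ℝ}

lemma tiltZ_eq_exp (m x : ℝ) : tiltZ m x = (1 + m) / 2 * exp x + (1 - m) / 2 * exp (-x) := by
  rw [tiltZ, cosh_eq, sinh_eq]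
  ring

lemma tiltZ_pos (hm : m ∈ Ioo (-1) 1) (x : ℝ) : 0 < tiltZ m x := by
  have := hm.1
  have := hm.2
  rw [tiltZ_eq_exp]
  have : 0 < (1 + m) / 2 * exp x := mul_pos (by linarith) (exp_pos x)
  have : 0 < (1 - m) / 2 * exp (-x) := mul_pos (by linarith) (exp_pos _)
  linarith

lemma one_sub_tiltMean_sq (hm : m ∈ Ioo (-1) 1) (x : ℝ) :
    1 - tiltMean m x ^ 2 = (1 - m ^ 2) / tiltZ m x ^ 2 := by
  have hZ := (tiltZ_pos hm x).ne'
  rw [tiltMean, div_pow, eq_div_iff (pow_ne_zero 2 hZ), sub_mul, div_mul_cancel₀ _ (by positivity),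
    tiltZ]
  linear_combination (1 - m ^ 2) * cosh_sq x

lemma one_sub_tiltMean_sq_pos (hm : m ∈ Ioo (-1) 1) (x : ℝ) : 0 < 1 - tiltMean m x ^ 2 := by
  rw [one_sub_tiltMean_sq hm]
  have : 0 < 1 - m ^ 2 := by nlinarith [hm.1, hm.2]
  have := tiltZ_pos hm x
  positivity

lemma tiltMean_mem_Ioo (hm : m ∈ Ioo (-1) 1) (x : ℝ) : tiltMean m x ∈ Ioo (-1) 1 :=
  abs_lt.1 ((sq_lt_one_iff_abs_lt_one _).1 (by linarith [one_sub_tiltMean_sq_pos hm x]))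

lemma hasDerivAt_tiltZ (m x : ℝ) : HasDerivAt (tiltZ m) (sinh x + m * cosh x) x :=
  (hasDerivAt_cosh x).add ((hasDerivAt_sinh x).const_mul m)

lemma hasDerivAt_tiltMean (hm : m ∈ Ioo (-1) 1) (x : ℝ) :
    HasDerivAt (tiltMean m) (1 - tiltMean m x ^ 2) x := by
  have hZ := (tiltZ_pos hm x).ne'
  have hnum : HasDerivAt (fun y => sinh y + m * cosh y) (tiltZ m x) x :=
    (hasDerivAt_sinh x).add ((hasDerivAt_cosh x).const_mul m)
  refine (hnum.div (hasDerivAt_tiltZ m x) hZ).congr_deriv ?_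
  rw [tiltMean]
  field_simp

lemma continuous_tiltMean (hm : m ∈ Ioo (-1) 1) : Continuous (tiltMean m) :=
  continuous_iff_continuousAt.2 fun x => (hasDerivAt_tiltMean hm x).continuousAt

lemma strictMono_tiltMean (hm : m ∈ Ioo (-1) 1) : StrictMono (tiltMean m) :=
  strictMono_of_hasDerivAt_pos (hasDerivAt_tiltMean hm) (one_sub_tiltMean_sq_pos hm)

lemma gfun_eq_log_tiltZ (hm : m ∈ Ioo (-1) 1) (x : ℝ) : gfun m x = log (tiltZ m x) - m * x := by
  have hfactor : (1 + m) / 2 * exp (x * (1 - m)) + (1 - m) / 2 * exp (-(x * (1 + m)))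
      = tiltZ m x * exp (-(m * x)) := by
    rw [tiltZ_eq_exp, add_mul, mul_assoc, mul_assoc, ← exp_add, ← exp_add]
    ring_nf
  rw [gfun, hfactor, log_mul (tiltZ_pos hm x).ne' (exp_pos _).ne', log_exp]
  ring

lemma gfun_zero (m : ℝ) : gfun m 0 = 0 := by
  rw [gfun, zero_mul, zero_mul, neg_zero, exp_zero, ← add_mul]
  ring_nf
  exact log_one

lemma hasDerivAt_gfun (hm : m ∈ Ioo (-1) 1) (x : ℝ) :
    HasDerivAt (gfun m) (tiltMean m x - m) x := by
  rw [funext (gfun_eq_log_tiltZ hm)]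
  exact ((hasDerivAt_tiltZ m x).log (tiltZ_pos hm x).ne').sub (hasDerivAt_const_mul m)

lemma continuous_gfun (hm : m ∈ Ioo (-1) 1) : Continuous (gfun m) :=
  continuous_iff_continuousAt.2 fun x => (hasDerivAt_gfun hm x).continuousAt

lemma abs_tiltMean_sub_le (hm : m ∈ Ioo (-1) 1) (x : ℝ) : |tiltMean m x - m| ≤ 2 := by
  have := tiltMean_mem_Ioo hm x
  rw [abs_le]
  constructor <;> linarith [this.1, this.2, hm.1, hm.2]

lemma abs_gfun_le (hm : m ∈ Ioo (-1) 1) (x : ℝ) : |gfun m x| ≤ 2 * |x| := by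
  simpa [gfun_zero] using convex_univ.norm_image_sub_le_of_norm_hasDerivWithin_le (f := gfun m)
    (fun y _ => (hasDerivAt_gfun hm y).hasDerivWithinAt)
    (fun y _ => abs_tiltMean_sub_le hm y) (mem_univ 0) (mem_univ x)

lemma hasDerivAt_tiltEntropy (hm : m ∈ Ioo (-1) 1) (x : ℝ) :
    HasDerivAt (tiltEntropy m) (x * (1 - tiltMean m x ^ 2)) x := by
  refine (((hasDerivAt_id x).mul ((hasDerivAt_tiltMean hm x).sub_const m)).sub
    (hasDerivAt_gfun hm x)).congr_deriv ?_
  simp only [id]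
  ring

lemma continuous_tiltEntropy (hm : m ∈ Ioo (-1) 1) : Continuous (tiltEntropy m) :=
  continuous_iff_continuousAt.2 fun x => (hasDerivAt_tiltEntropy hm x).continuousAt

lemma strictMonoOn_tiltEntropy (hm : m ∈ Ioo (-1) 1) : StrictMonoOn (tiltEntropy m) (Ici 0) := by
  refine strictMonoOn_of_deriv_pos (convex_Ici 0) (continuous_tiltEntropy hm).continuousOn ?_
  intro x hx
  rw [interior_Ici] at hx
  rw [(hasDerivAt_tiltEntropy hm x).deriv]
  exact mul_pos hx (one_sub_tiltMean_sq_pos hm x)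

lemma strictAntiOn_tiltEntropy (hm : m ∈ Ioo (-1) 1) : StrictAntiOn (tiltEntropy m) (Iic 0) := by
  refine strictAntiOn_of_deriv_neg (convex_Iic 0) (continuous_tiltEntropy hm).continuousOn ?_
  intro x hx
  rw [interior_Iic] at hx
  rw [(hasDerivAt_tiltEntropy hm x).deriv]
  exact mul_neg_of_neg_of_pos hx (one_sub_tiltMean_sq_pos hm x)

lemma strictMonoOn_tiltEntropy_mul (hm : m ∈ Ioo (-1) 1) {x : ℝ} (hx : x ≠ 0) :
    StrictMonoOn (fun l => tiltEntropy m (l * x)) (Ici 0) := by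
  intro a (ha : 0 ≤ a) b (hb : 0 ≤ b) hab
  rcases hx.lt_or_gt with hneg | hpos
  · exact strictAntiOn_tiltEntropy hm (mul_nonpos_of_nonneg_of_nonpos hb hneg.le)
      (mul_nonpos_of_nonneg_of_nonpos ha hneg.le) (mul_lt_mul_of_neg_right hab hneg)
  · exact strictMonoOn_tiltEntropy hm (mul_nonneg ha hpos.le) (mul_nonneg hb hpos.le)
      (mul_lt_mul_of_pos_right hab hpos)

lemma monotoneOn_tiltEntropy_mul (hm : m ∈ Ioo (-1) 1) (x : ℝ) :
    MonotoneOn (fun l => tiltEntropy m (l * x)) (Ici 0) := by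
  rcases eq_or_ne x 0 with rfl | hx
  · simp only [mul_zero]
    exact monotoneOn_const
  · exact (strictMonoOn_tiltEntropy_mul hm hx).monotoneOn

lemma abs_tiltEntropy_le (hm : m ∈ Ioo (-1) 1) (x : ℝ) : |tiltEntropy m x| ≤ 4 * |x| :=
  calc |tiltEntropy m x| ≤ |x * (tiltMean m x - m)| + |gfun m x| := abs_sub _ _
    _ ≤ |x| * 2 + 2 * |x| := by
      rw [abs_mul]
      gcongr
      exacts [abs_tiltMean_sub_le hm x, abs_gfun_le hm x]
    _ = 4 * |x| := by ring

end TiltedSpin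

section Fejer

/-- The triangle function, whose Fourier transform is the Fejér kernel. -/
def triangle (t : ℝ) : ℝ := max (1 - |t|) 0

/-- The Fejér kernel `2 (1 - cos x) / x ^ 2`, written without the singularity at `0`. -/
def fejer (x : ℝ) : ℝ := sinc (x / 2) ^ 2

lemma triangle_neg (t : ℝ) : triangle (-t) = triangle t := by rw [triangle, triangle, abs_neg]

lemma continuous_triangle : Continuous triangle := by
  unfold triangle
  fun_prop

lemma hasCompactSupport_triangle : HasCompactSupport triangle := by
  refine HasCompactSupport.intro (isCompact_Icc (a := (-1 : ℝ)) (b := 1)) fun t ht => ?_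
  have : 1 < |t| := not_le.1 fun h => ht (abs_le.1 h)
  exact max_eq_right (by linarith)

lemma fejer_nonneg (x : ℝ) : 0 ≤ fejer x := sq_nonneg _

lemma fejer_zero : fejer 0 = 1 := by simp [fejer]

lemma fejer_of_ne_zero {x : ℝ} (hx : x ≠ 0) : fejer x = 2 * (1 - cos x) / x ^ 2 := by
  have hcos : cos x = 1 - 2 * sin (x / 2) ^ 2 := by
    rw [← mul_div_cancel₀ x (two_ne_zero' ℝ), cos_two_mul, cos_sq']
    ring_nf
  rw [fejer, sinc_of_ne_zero (by positivity), hcos]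
  field_simp
  ring

lemma fejer_pos {x : ℝ} (hx : |x| ≤ 1) : 0 < fejer x := by
  rcases eq_or_ne x 0 with rfl | hx0
  · simp [fejer_zero]
  · have hx2 : |x / 2| < π := by
      rw [abs_div, abs_two]
      linarith [pi_gt_three]
    have hsin : sin (x / 2) ≠ 0 := by
      rwa [Ne, sin_eq_zero_iff_of_lt_of_lt (abs_lt.1 hx2).1 (abs_lt.1 hx2).2, div_eq_zero_iff,
        or_iff_left two_ne_zero]
    rw [fejer, sinc_of_ne_zero (by positivity)]
    positivity

lemma continuous_fejer : Continuous fejer := by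
  unfold fejer
  fun_prop

lemma fejer_le (x : ℝ) : fejer x ≤ 8 * (1 + x ^ 2)⁻¹ := by
  rcases eq_or_ne x 0 with rfl | hx
  · norm_num [fejer_zero]
  · rw [fejer_of_ne_zero hx, ← div_eq_mul_inv, div_le_div_iff₀ (by positivity) (by positivity)]
    nlinarith [neg_one_le_cos x, one_sub_sq_div_two_le_cos (x := x), sq_nonneg x]

lemma integrable_fejer : Integrable fejer := by
  refine (integrable_inv_one_add_sq.const_mul 8).mono' continuous_fejer.aestronglyMeasurable ?_
  exact Eventually.of_forall fun x => (norm_of_nonneg (fejer_nonneg x)).trans_le (fejer_le x)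

lemma intervalIntegral_one_sub_mul_cos (x : ℝ) :
    ∫ t in (0 : ℝ)..1, (1 - t) * cos (t * x) = fejer x / 2 := by
  rcases eq_or_ne x 0 with rfl | hx
  · simp only [mul_zero, cos_zero, mul_one, fejer_zero]
    rw [intervalIntegral.integral_comp_sub_left (fun t : ℝ => t) 1, integral_id]
    norm_num
  have hderiv (t : ℝ) : HasDerivAt (fun t => (1 - t) * (sin (t * x) / x) - cos (t * x) / x ^ 2)
      ((1 - t) * cos (t * x)) t := by
    have hmul : HasDerivAt (fun t => t * x) x t := hasDerivAt_mul_const x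
    refine ((((hasDerivAt_id t).const_sub 1).mul (hmul.sin.div_const x)).sub
      (hmul.cos.div_const (x ^ 2))).congr_deriv ?_
    simp only [id]
    field_simp
    ring
  rw [intervalIntegral.integral_eq_sub_of_hasDerivAt (fun t _ => hderiv t)
    (Continuous.intervalIntegrable (by fun_prop) _ _), fejer_of_ne_zero hx]
  simp only [zero_mul, one_mul, sin_zero, cos_zero, sub_self, sub_zero]
  field_simp
  ring

lemma integral_triangle_mul_cos (x : ℝ) : ∫ t, triangle t * cos (t * x) = fejer x := by
  have heven (t : ℝ) : triangle t * cos (t * x) = triangle |t| * cos (|t| * x) := by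
    rcases abs_choice t with h | h <;> simp [h, triangle_neg]
  have hvanish : ∀ t ∈ Ioi (0 : ℝ) \ Ioc 0 1, triangle t * cos (t * x) = 0 := by
    rintro t ⟨ht0 : 0 < t, ht1⟩
    have : 1 < t := not_le.1 fun h => ht1 ⟨ht0, h⟩
    rw [triangle, max_eq_right (by linarith [le_abs_self t]), zero_mul]
  calc ∫ t, triangle t * cos (t * x) = 2 * ∫ t in Ioi (0 : ℝ), triangle t * cos (t * x) := by
        rw [← integral_comp_abs (f := fun t => triangle t * cos (t * x))]
        exact integral_congr_ae (.of_forall heven)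
    _ = 2 * ∫ t in Ioc (0 : ℝ) 1, (1 - t) * cos (t * x) := by
        rw [setIntegral_eq_of_subset_of_forall_sdiff_eq_zero measurableSet_Ioi
          Ioc_subset_Ioi_self hvanish]
        refine congrArg _ (setIntegral_congr_fun measurableSet_Ioc fun t ht => ?_)
        rw [triangle, abs_of_pos ht.1, max_eq_left (by linarith [ht.2])]
    _ = fejer x := by
        rw [← intervalIntegral.integral_of_le zero_le_one, intervalIntegral_one_sub_mul_cos]
        ring

lemma integral_triangle_mul_exp (x : ℝ) :
    ∫ t, (triangle t : ℂ) * Complex.exp (t * x * Complex.I) = fejer x := by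
  have hint (y : ℝ) : Integrable fun t : ℝ => (triangle t : ℂ) * Complex.exp (t * y * Complex.I) :=
    Continuous.integrable_of_hasCompactSupport
      (by have := continuous_triangle; fun_prop)
      (hasCompactSupport_triangle.comp_left (g := ((↑) : ℝ → ℂ)) Complex.ofReal_zero).mul_right
  have hreflect : ∫ t, (triangle t : ℂ) * Complex.exp (t * x * Complex.I)
      = ∫ t, (triangle t : ℂ) * Complex.exp (t * (-x : ℝ) * Complex.I) := by
    rw [← integral_neg_eq_self]
    simp [triangle_neg]
  refine mul_left_cancel₀ (two_ne_zero' ℂ) ?_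
  rw [two_mul]
  nth_rewrite 2 [hreflect]
  rw [← integral_add (hint x) (hint (-x)), ← integral_triangle_mul_cos,
    ← integral_complex_ofReal, ← integral_const_mul]
  congr 1 with t
  push_cast
  rw [Complex.cos]
  ring_nf

open scoped FourierTransform in
lemma fourier_triangle : 𝓕 (fun t => (triangle t : ℂ)) = fun w => (fejer (2 * π * w) : ℂ) := by
  ext w
  rw [fourier_real_eq_integral_exp_smul, ← integral_triangle_mul_exp, ← integral_neg_eq_self]
  congr 1 with t
  rw [smul_eq_mul, mul_comm, triangle_neg]
  congr 2
  push_cast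
  ring

open scoped FourierTransform in
lemma integral_fejer_mul_exp (θ : ℝ) :
    ∫ x, (fejer x : ℂ) * Complex.exp (θ * x * Complex.I) = 2 * π * triangle θ := by
  have hinv : 𝓕⁻ (𝓕 fun t => (triangle t : ℂ)) θ = triangle θ := by
    rw [Continuous.fourierInv_fourier_eq (f := fun t => (triangle t : ℂ))
      (Complex.continuous_ofReal.comp continuous_triangle)
      (continuous_triangle.integrable_of_hasCompactSupport hasCompactSupport_triangle).ofReal]
    rw [fourier_triangle]
    exact (integrable_fejer.comp_mul_left' (by positivity)).ofReal
  have hscaled : ∫ x : ℝ, (fejer (2 * π * x) : ℂ)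
      * Complex.exp (θ * (2 * π * x : ℝ) * Complex.I) = triangle θ := by
    rw [← hinv, fourier_triangle, fourierInv_eq']
    congr 1 with t
    rw [smul_eq_mul, mul_comm]
    congr 2
    simp only [RCLike.inner_apply, conj_trivial]
    push_cast
    ring
  rw [Measure.integral_comp_mul_left
    (fun x : ℝ => (fejer x : ℂ) * Complex.exp (θ * x * Complex.I)) (2 * π),
    abs_of_pos (by positivity), inv_smul_eq_iff₀ (by positivity)] at hscaled
  rw [hscaled, Complex.real_smul]
  push_cast
  ring

end Fejer

section FiniteMeasureLevy

variable {E : Type*} [NormedAddCommGroup E] [InnerProductSpace ℝ E] [MeasurableSpace E]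

lemma charFun_zero_eq_mass (μ : FiniteMeasure E) : charFun (μ : Measure E) 0 = (μ.mass : ℂ) := by
  rw [charFun_zero]
  rfl

lemma charFun_normalize {μ : FiniteMeasure E} (hμ : μ ≠ 0) (t : E) :
    charFun (μ.normalize : Measure E) t = (μ.mass : ℂ)⁻¹ * charFun (μ : Measure E) t := by
  rw [μ.toMeasure_normalize_eq_of_nonzero hμ, charFun_apply, integral_smul_nnreal_measure,
    charFun_apply, NNReal.smul_def, Complex.real_smul]
  push_cast
  rfl

lemma finiteMeasure_tendsto_of_tendsto_charFun [FiniteDimensional ℝ E] [BorelSpace E]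
    {μ : ℕ → FiniteMeasure E} {μ₀ : FiniteMeasure E}
    (h : ∀ t, Tendsto (fun n => charFun (μ n : Measure E) t) atTop
      (𝓝 (charFun (μ₀ : Measure E) t))) :
    Tendsto μ atTop (𝓝 μ₀) := by
  have hmassC : Tendsto (fun n => ((μ n).mass : ℂ)) atTop (𝓝 (μ₀.mass : ℂ)) := by
    simpa only [charFun_zero_eq_mass] using h 0
  have hmass : Tendsto (fun n => (μ n).mass) atTop (𝓝 μ₀.mass) := by
    rw [← NNReal.tendsto_coe]
    exact (Complex.continuous_re.tendsto _).comp hmassC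
  rcases eq_or_ne μ₀ 0 with rfl | hne
  · exact FiniteMeasure.tendsto_zero_of_tendsto_zero_mass (by simpa using hmass)
  have hmass_ne : μ₀.mass ≠ 0 := μ₀.mass_nonzero_iff.2 hne
  refine FiniteMeasure.tendsto_of_tendsto_normalize_testAgainstNN_of_tendsto_mass
    (ProbabilityMeasure.tendsto_of_tendsto_charFun fun t => ?_) hmass
  rw [charFun_normalize hne]
  refine ((hmassC.inv₀ (by simpa using hmass_ne)).mul (h t)).congr' ?_
  filter_upwards [hmass.eventually_ne hmass_ne] with n hn
  rw [charFun_normalize ((μ n).mass_nonzero_iff.1 hn)]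

end FiniteMeasureLevy

section VagueConvergence

/-- The measure `ν` weighted by the Fejér kernel of width `R`. Its characteristic function only
involves that of `ν` on a bounded set, and `R` can be chosen so that the weight is positive on
any given compact set. -/
def fejerWeighted (R : ℝ) (ν : Measure ℝ) : Measure ℝ :=
  ν.withDensity fun x => ENNReal.ofReal (fejer (x / R))

lemma integral_fejerWeighted {E : Type*} [NormedAddCommGroup E] [NormedSpace ℝ E] (R : ℝ)
    (ν : Measure ℝ) (F : ℝ → E) :
    ∫ x, F x ∂fejerWeighted R ν = ∫ x, fejer (x / R) • F x ∂ν := by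
  have hmeas : Measurable fun x => ENNReal.ofReal (fejer (x / R)) :=
    (continuous_fejer.measurable.comp (measurable_id.div_const R)).ennreal_ofReal
  rw [fejerWeighted, integral_withDensity_eq_integral_toReal_smul hmeas
    (.of_forall fun _ => ENNReal.ofReal_lt_top)]
  simp only [ENNReal.toReal_ofReal (fejer_nonneg _)]

lemma charFun_fejerWeighted_volume {R : ℝ} (hR : 0 < R) (θ : ℝ) :
    charFun (fejerWeighted R volume) θ = 2 * π * (R * triangle (R * (0 - θ)) : ℝ) := by
  have hscale := Measure.integral_comp_mul_left
    (fun x : ℝ => (fejer x : ℂ) * Complex.exp ((R * θ : ℝ) * x * Complex.I)) R⁻¹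
  rw [integral_fejer_mul_exp, inv_inv, abs_of_pos hR, Complex.real_smul] at hscale
  rw [charFun_apply_real, integral_fejerWeighted, show R * (0 - θ) = -(R * θ) by ring,
    triangle_neg]
  refine (integral_congr_ae (.of_forall fun x => ?_)).trans (hscale.trans ?_)
  · have hRC : (R : ℂ) ≠ 0 := by exact_mod_cast hR.ne'
    simp only [Complex.real_smul, div_eq_inv_mul]
    congr 2
    push_cast
    field_simp
  · push_cast
    ring

lemma charFun_fejerWeighted_eq_integral_triangle (R : ℝ) (ν : Measure ℝ) [IsFiniteMeasure ν]
    (θ : ℝ) :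
    charFun (fejerWeighted R ν) θ = ∫ t, (triangle t : ℂ) * charFun ν (θ + t / R) := by
  have hexpand (x : ℝ) : fejer (x / R) • Complex.exp (θ * x * Complex.I)
      = ∫ t, (triangle t : ℂ) * Complex.exp ((θ + t / R : ℝ) * x * Complex.I) := by
    rw [Complex.real_smul, ← integral_triangle_mul_exp, ← integral_mul_const]
    congr 1 with t
    rw [mul_assoc, ← Complex.exp_add]
    congr 2
    push_cast
    ring
  have htri : Integrable fun t => (triangle t : ℂ) :=
    (continuous_triangle.integrable_of_hasCompactSupport hasCompactSupport_triangle).ofReal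
  rw [charFun_apply_real, integral_fejerWeighted]
  simp_rw [hexpand]
  rw [integral_integral_swap]
  · simp_rw [integral_const_mul, charFun_apply_real]
  · refine ((integrable_const (1 : ℂ)).mul_prod htri).mono ?_ (.of_forall fun z => ?_)
    · have := continuous_triangle
      exact Continuous.aestronglyMeasurable (by unfold Function.uncurry; fun_prop)
    · simp only [Function.uncurry]
      rw [norm_mul, ← Complex.ofReal_mul, Complex.norm_exp_ofReal_mul_I, one_mul, mul_one]

lemma charFun_fejerWeighted {R : ℝ} (hR : 0 < R) (ν : Measure ℝ) [IsFiniteMeasure ν] (θ : ℝ) :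
    charFun (fejerWeighted R ν) θ = ∫ u, (R * triangle (R * (u - θ)) : ℝ) * charFun ν u := by
  let F : ℝ → ℂ := fun t => (triangle t : ℂ) * charFun ν (θ + t / R)
  calc charFun (fejerWeighted R ν) θ = ∫ t, F t :=
        charFun_fejerWeighted_eq_integral_triangle R ν θ
    _ = R • ∫ u, F (R * u) := by
        rw [Measure.integral_comp_mul_left F, abs_of_pos (inv_pos.2 hR), smul_inv_smul₀ hR.ne']
    _ = R • ∫ u, F (R * (u - θ)) := by
        rw [integral_sub_right_eq_self (μ := volume) (fun u => F (R * u)) θ]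
    _ = ∫ u, (R * triangle (R * (u - θ)) : ℝ) * charFun ν u := by
        rw [← integral_smul]
        congr 1 with u
        simp only [F]
        rw [Complex.real_smul, mul_div_cancel_left₀ _ hR.ne', add_sub_cancel]
        push_cast
        ring

lemma isFiniteMeasure_fejerWeighted (R : ℝ) (ν : Measure ℝ) [IsFiniteMeasure ν] :
    IsFiniteMeasure (fejerWeighted R ν) := by
  refine isFiniteMeasure_withDensity_ofReal (Integrable.of_bound (C := 8) ?_ (.of_forall ?_)).2
  · exact (continuous_fejer.comp (continuous_id.div_const R)).aestronglyMeasurable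
  · intro x
    rw [norm_of_nonneg (fejer_nonneg _)]
    have : (1 + (x / R) ^ 2)⁻¹ ≤ 1 := inv_le_one_of_one_le₀ (by linarith [sq_nonneg (x / R)])
    linarith [fejer_le (x / R)]

lemma isFiniteMeasure_fejerWeighted_volume {R : ℝ} (hR : R ≠ 0) :
    IsFiniteMeasure (fejerWeighted R volume) :=
  isFiniteMeasure_withDensity_ofReal (integrable_fejer.comp_div hR).2

lemma tendsto_integral_fejerWeighted {ν : ℕ → Measure ℝ} [∀ n, IsFiniteMeasure (ν n)]
    (hν : ∀ ψ : ℝ → ℝ, Continuous ψ → HasCompactSupport ψ →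
      Tendsto (fun n => ∫ u, (ψ u : ℂ) * charFun (ν n) u) atTop (𝓝 (2 * π * ψ 0)))
    {R : ℝ} (hR : 0 < R) (g : BoundedContinuousFunction ℝ ℝ) :
    Tendsto (fun n => ∫ x, g x ∂fejerWeighted R (ν n)) atTop
      (𝓝 (∫ x, g x ∂fejerWeighted R volume)) := by
  let μ (n : ℕ) : FiniteMeasure ℝ :=
    ⟨fejerWeighted R (ν n), isFiniteMeasure_fejerWeighted R (ν n)⟩
  let μ₀ : FiniteMeasure ℝ :=
    ⟨fejerWeighted R volume, isFiniteMeasure_fejerWeighted_volume hR.ne'⟩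
  suffices hweak : Tendsto μ atTop (𝓝 μ₀) from
    FiniteMeasure.tendsto_iff_forall_integral_tendsto.1 hweak g
  refine finiteMeasure_tendsto_of_tendsto_charFun fun θ => ?_
  change Tendsto (fun n => charFun (fejerWeighted R (ν n)) θ) atTop
    (𝓝 (charFun (fejerWeighted R volume) θ))
  simp_rw [charFun_fejerWeighted_volume hR, charFun_fejerWeighted hR]
  refine hν (fun u => R * triangle (R * (u - θ))) ?_ ?_
  · exact continuous_const.mul (continuous_triangle.comp (by fun_prop))
  · exact (hasCompactSupport_triangle.comp_homeomorph
      ((Homeomorph.subRight θ).trans (Homeomorph.mulLeft₀ R hR.ne'))).mul_left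

lemma exists_boundedContinuous_fejer_mul_eq {f : ℝ → ℝ} (hf : Continuous f)
    (hfc : HasCompactSupport f) :
    ∃ R > 0, ∃ g : BoundedContinuousFunction ℝ ℝ, ∀ x, fejer (x / R) * g x = f x := by
  obtain ⟨R, hR, hRf⟩ := hfc.exists_pos_le_norm
  have hk : Continuous fun x => fejer (x / R) := continuous_fejer.comp (by fun_prop)
  have hkpos {x : ℝ} (hx : ‖x‖ ≤ R) : 0 < fejer (x / R) :=
    fejer_pos (by rwa [abs_div, abs_of_pos hR, div_le_one hR])
  have hcont : Continuous fun x => f x / fejer (x / R) := by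
    refine continuous_iff_continuousAt.2 fun x => ?_
    rcases le_or_gt ‖x‖ R with hx | hx
    · exact hf.continuousAt.div hk.continuousAt (hkpos hx).ne'
    · refine continuousAt_const.congr (f := fun _ => 0) ?_
      filter_upwards [continuous_norm.continuousAt.eventually (lt_mem_nhds hx)] with y hy
      rw [hRf y hy.le, zero_div]
  have hsupp : HasCompactSupport fun x => f x / fejer (x / R) := by
    simp_rw [div_eq_mul_inv]
    exact hfc.mul_right
  obtain ⟨B, hB⟩ := hsupp.exists_bound_of_continuous hcont
  refine ⟨R, hR, .ofNormedAddCommGroup _ hcont B hB, fun x => ?_⟩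
  rcases le_or_gt ‖x‖ R with hx | hx
  · exact mul_div_cancel₀ _ (hkpos hx).ne'
  · simp [hRf x hx.le]

theorem tendsto_integral_volume_of_tendsto_charFun {ν : ℕ → Measure ℝ}
    [∀ n, IsFiniteMeasure (ν n)]
    (hν : ∀ ψ : ℝ → ℝ, Continuous ψ → HasCompactSupport ψ →
      Tendsto (fun n => ∫ u, (ψ u : ℂ) * charFun (ν n) u) atTop (𝓝 (2 * π * ψ 0)))
    {f : ℝ → ℝ} (hf : Continuous f) (hfc : HasCompactSupport f) :
    Tendsto (fun n => ∫ x, f x ∂ν n) atTop (𝓝 (∫ x, f x)) := by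
  obtain ⟨R, hR, g, hg⟩ := exists_boundedContinuous_fejer_mul_eq hf hfc
  simpa only [integral_fejerWeighted, smul_eq_mul, hg] using
    tendsto_integral_fejerWeighted hν hR g

end VagueConvergence

section SpinCharFun

/-- The characteristic function at `y` of a centred spin, taking the values `1 - M` and `-1 - M`
with probabilities `(1 + M) / 2` and `(1 - M) / 2`. -/
def spinCharFun (M y : ℝ) : ℂ :=
  ((1 + M) / 2 : ℝ) * Complex.exp ((y * (1 - M) : ℝ) * Complex.I)
    + ((1 - M) / 2 : ℝ) * Complex.exp ((y * (-1 - M) : ℝ) * Complex.I)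

variable {M : ℝ}

lemma one_sub_sq_nonneg (hM : M ∈ Icc (-1) 1) : 0 ≤ 1 - M ^ 2 := by nlinarith [hM.1, hM.2]

lemma continuous_spinCharFun (M : ℝ) : Continuous (spinCharFun M) := by
  unfold spinCharFun
  fun_prop

lemma spinCharFun_eq_exp_mul (M y : ℝ) :
    spinCharFun M y
      = Complex.exp ((-(M * y) : ℝ) * Complex.I) * (cos y + (M * sin y : ℝ) * Complex.I) := by
  have hpm : (cos y + (M * sin y : ℝ) * Complex.I : ℂ)
      = ((1 + M) / 2 : ℝ) * Complex.exp (y * Complex.I)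
        + ((1 - M) / 2 : ℝ) * Complex.exp ((-y : ℝ) * Complex.I) := by
    rw [Complex.exp_mul_I, Complex.exp_mul_I]
    push_cast
    rw [Complex.cos_neg, Complex.sin_neg]
    ring
  rw [hpm, spinCharFun, mul_add, mul_left_comm, mul_left_comm (Complex.exp _), ← Complex.exp_add,
    ← Complex.exp_add]
  push_cast
  ring_nf

lemma norm_spinCharFun_sq (M y : ℝ) : ‖spinCharFun M y‖ ^ 2 = 1 - (1 - M ^ 2) * sin y ^ 2 := by
  rw [spinCharFun_eq_exp_mul, norm_mul, Complex.norm_exp_ofReal_mul_I, one_mul,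
    ← Complex.normSq_eq_norm_sq, Complex.normSq_add_mul_I]
  linear_combination sin_sq_add_cos_sq y

lemma norm_spinCharFun_le (M y : ℝ) :
    ‖spinCharFun M y‖ ≤ exp (-((1 - M ^ 2) * sin y ^ 2) / 2) := by
  refine le_of_sq_le_sq ?_ (exp_pos _).le
  rw [norm_spinCharFun_sq, ← exp_nat_mul, Nat.cast_two, mul_div_cancel₀ _ two_ne_zero]
  linarith [add_one_le_exp (-((1 - M ^ 2) * sin y ^ 2))]

lemma norm_exp_mul_I_sub_taylor_le (z : ℝ) :
    ‖Complex.exp (z * Complex.I) - (1 + z * Complex.I - z ^ 2 / 2)‖ ≤ 4 * |z| ^ 3 := by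
  have hnorm : ‖(z * Complex.I : ℂ)‖ = |z| := by simp
  rcases le_or_gt |z| 1 with hz | hz
  · have htaylor := Complex.norm_exp_sub_sum_le_norm_mul_exp (z * Complex.I) 3
    have hsum : (∑ k ∈ Finset.range 3, (z * Complex.I : ℂ) ^ k / (k.factorial : ℂ))
        = 1 + z * Complex.I - z ^ 2 / 2 := by
      simp only [Finset.sum_range_succ, Finset.sum_range_zero, mul_pow, Complex.I_sq,
        Nat.factorial, Nat.cast_succ]
      ring
    rw [hsum, hnorm] at htaylor
    have : exp |z| ≤ 4 := by
      linarith [exp_le_exp.2 hz, exp_one_lt_d9]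
    nlinarith [pow_nonneg (abs_nonneg z) 3]
  · have hpoly : ‖(1 + z * Complex.I - z ^ 2 / 2 : ℂ)‖ ≤ 1 + |z| + |z| ^ 2 / 2 := by
      refine (norm_sub_le _ _).trans (add_le_add ((norm_add_le _ _).trans ?_) ?_)
      · rw [hnorm, norm_one]
      · simp
    have hsum := norm_sub_le (Complex.exp (z * Complex.I)) (1 + z * Complex.I - z ^ 2 / 2)
    rw [Complex.norm_exp_ofReal_mul_I] at hsum
    have : 1 ≤ |z| ^ 3 := one_le_pow₀ hz.le
    have : |z| ≤ |z| ^ 3 := le_self_pow₀ hz.le (by norm_num)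
    have : |z| ^ 2 ≤ |z| ^ 3 := pow_le_pow_right₀ hz.le (by norm_num)
    linarith

lemma abs_exp_neg_sub_one_sub_le {a y : ℝ} (ha : 0 ≤ a) (hay : a ≤ y ^ 2 / 2) :
    |exp (-a) - (1 - a)| ≤ |y| ^ 3 := by
  rw [← sq_abs] at hay
  have hy := abs_nonneg y
  rcases le_or_gt |y| 1 with hy1 | hy1
  · have ha1 : |-a| ≤ 1 := by
      rw [abs_neg, abs_of_nonneg ha]
      nlinarith
    calc |exp (-a) - (1 - a)| = |exp (-a) - 1 - -a| := by ring_nf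
      _ ≤ (-a) ^ 2 := abs_exp_sub_one_sub_id_le ha1
      _ ≤ (|y| ^ 2 / 2) ^ 2 := by
        rw [neg_sq]
        gcongr
      _ ≤ |y| ^ 3 := by nlinarith [pow_le_pow_of_le_one hy hy1 (show 3 ≤ 4 by norm_num)]
  · have hexp : exp (-a) ≤ 1 := exp_le_one_iff.2 (by linarith)
    rw [abs_of_nonneg (by linarith [add_one_le_exp (-a)])]
    have : |y| ^ 2 ≤ |y| ^ 3 := pow_le_pow_right₀ hy1.le (by norm_num)
    linarith

lemma norm_spinCharFun_sub_exp_le (hM : M ∈ Icc (-1) 1) (y : ℝ) :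
    ‖spinCharFun M y - (exp (-((1 - M ^ 2) * y ^ 2) / 2) : ℝ)‖ ≤ 33 * |y| ^ 3 := by
  let T (z : ℝ) : ℂ := Complex.exp (z * Complex.I) - (1 + z * Complex.I - z ^ 2 / 2)
  let ε : ℝ := exp (-((1 - M ^ 2) * y ^ 2 / 2)) - (1 - (1 - M ^ 2) * y ^ 2 / 2)
  have hT {c : ℝ} (hc : |c| ≤ 2) : ‖T (y * c)‖ ≤ 32 * |y| ^ 3 :=
    calc ‖T (y * c)‖ ≤ 4 * |y * c| ^ 3 := norm_exp_mul_I_sub_taylor_le _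
      _ = 4 * (|y| ^ 3 * |c| ^ 3) := by rw [abs_mul, mul_pow]
      _ ≤ 4 * (|y| ^ 3 * 2 ^ 3) := by gcongr
      _ = 32 * |y| ^ 3 := by ring
  have hε : ‖(ε : ℂ)‖ ≤ |y| ^ 3 := by
    rw [Complex.norm_real]
    have := one_sub_sq_nonneg hM
    exact abs_exp_neg_sub_one_sub_le (by positivity) (by nlinarith [sq_nonneg y, sq_nonneg M])
  have hsplit : spinCharFun M y - (exp (-((1 - M ^ 2) * y ^ 2) / 2) : ℝ)
      = ((1 + M) / 2 : ℝ) * T (y * (1 - M)) + ((1 - M) / 2 : ℝ) * T (y * (-1 - M)) - ε := by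
    simp only [spinCharFun, T, ε, neg_div]
    push_cast
    ring
  have hp : 0 ≤ (1 + M) / 2 := by linarith [hM.1]
  have hq : 0 ≤ (1 - M) / 2 := by linarith [hM.2]
  rw [hsplit]
  calc _ ≤ ‖(((1 + M) / 2 : ℝ) : ℂ)‖ * ‖T (y * (1 - M))‖
        + ‖(((1 - M) / 2 : ℝ) : ℂ)‖ * ‖T (y * (-1 - M))‖ + ‖(ε : ℂ)‖ := by
        rw [← norm_mul, ← norm_mul]
        exact (norm_sub_le _ _).trans (add_le_add_left (norm_add_le _ _) _)
    _ ≤ (1 + M) / 2 * (32 * |y| ^ 3) + (1 - M) / 2 * (32 * |y| ^ 3) + |y| ^ 3 := by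
        rw [Complex.norm_real, Complex.norm_real, norm_of_nonneg hp, norm_of_nonneg hq]
        gcongr
        exacts [hT (abs_le.2 ⟨by linarith [hM.2], by linarith [hM.1]⟩),
          hT (abs_le.2 ⟨by linarith [hM.2], by linarith [hM.1]⟩)]
    _ = 33 * |y| ^ 3 := by ring

lemma norm_prod_sub_prod_le {ι R : Type*} [NormedCommRing R] [NormOneClass R] (s : Finset ι)
    {a b : ι → R} (ha : ∀ i ∈ s, ‖a i‖ ≤ 1) (hb : ∀ i ∈ s, ‖b i‖ ≤ 1) :
    ‖∏ i ∈ s, a i - ∏ i ∈ s, b i‖ ≤ ∑ i ∈ s, ‖a i - b i‖ := by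
  classical
  induction s using Finset.induction_on with
  | empty => simp
  | insert i s hi ih =>
    rw [Finset.forall_mem_insert] at ha hb
    have hprod : ‖∏ j ∈ s, a j‖ ≤ 1 :=
      (s.norm_prod_le a).trans (Finset.prod_le_one (fun _ _ => norm_nonneg _) ha.2)
    rw [Finset.prod_insert hi, Finset.prod_insert hi, Finset.sum_insert hi]
    calc ‖a i * ∏ j ∈ s, a j - b i * ∏ j ∈ s, b j‖
        = ‖(a i - b i) * ∏ j ∈ s, a j + b i * (∏ j ∈ s, a j - ∏ j ∈ s, b j)‖ := by ring_nf
      _ ≤ ‖a i - b i‖ * ‖∏ j ∈ s, a j‖ + ‖b i‖ * ‖∏ j ∈ s, a j - ∏ j ∈ s, b j‖ :=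
        (norm_add_le _ _).trans (add_le_add (norm_mul_le _ _) (norm_mul_le _ _))
      _ ≤ ‖a i - b i‖ + ∑ j ∈ s, ‖a j - b j‖ :=
        add_le_add (mul_le_of_le_one_right (norm_nonneg _) hprod)
          ((mul_le_of_le_one_left (norm_nonneg _) hb.1).trans (ih ha.2 hb.2))

lemma norm_prod_spinCharFun_le (M h : ℕ → ℝ) (n : ℕ) (u : ℝ) :
    ‖∏ i ∈ Finset.range n, spinCharFun (M i) (u * h i)‖
      ≤ exp (-(∑ i ∈ Finset.range n, (1 - M i ^ 2) * sin (u * h i) ^ 2) / 2) := by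
  rw [norm_prod, ← Finset.sum_neg_distrib, Finset.sum_div, exp_sum]
  exact Finset.prod_le_prod (fun _ _ => norm_nonneg _) fun i _ => norm_spinCharFun_le _ _

end SpinCharFun

section LocalLimit

/-- The variance of `∑ i < n, h i * s i` for independent spins `s i` of means `M i`. -/
def spinVariance (M h : ℕ → ℝ) (n : ℕ) : ℝ := ∑ i ∈ Finset.range n, (1 - M i ^ 2) * h i ^ 2

/-- The conditions on the means `M n i` and on the coefficients `h i` under which the sums
`∑ i < n, h i * s i` of independent spins obey a local limit theorem: Lyapunov's condition, and a
quantitative form of the statement that the sums are not supported by a lattice. -/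
structure LocalLimitCondition (M : ℕ → ℕ → ℝ) (h : ℕ → ℝ) : Prop where
  mean_mem : ∀ n i, M n i ∈ Icc (-1) 1
  cube_le : ∃ K : ℝ, ∀ᶠ n : ℕ in atTop, ∑ i ∈ Finset.range n, |h i| ^ 3 ≤ K * n
  sine_ge : ∀ T : ℝ, ∃ κ > 0, ∀ᶠ n : ℕ in atTop, ∀ u, |u| ≤ T →
    κ * n * u ^ 2 ≤ ∑ i ∈ Finset.range n, (1 - M n i ^ 2) * sin (u * h i) ^ 2

/-- The test function `ψ` times the characteristic function at `u` of the centred sum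
`∑ i < n, h i * (s i - M i)` of independent spins `s i` of means `M i`, translated by `d`. -/
def fourierIntegrand (ψ : ℝ → ℝ) (d : ℝ) (M h : ℕ → ℝ) (n : ℕ) (u : ℝ) : ℂ :=
  ψ u * (Complex.exp ((u * d : ℝ) * Complex.I)
    * ∏ i ∈ Finset.range n, spinCharFun (M i) (u * h i))

lemma norm_prod_spinCharFun_sub_exp_le {M h : ℕ → ℝ} {n : ℕ} (hM : ∀ i, M i ∈ Icc (-1) 1)
    (hV : 0 < spinVariance M h n) (s : ℝ) :
    ‖∏ i ∈ Finset.range n, spinCharFun (M i) (s / √(spinVariance M h n) * h i)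
        - (exp (-s ^ 2 / 2) : ℝ)‖
      ≤ 33 * |s / √(spinVariance M h n)| ^ 3 * ∑ i ∈ Finset.range n, |h i| ^ 3 := by
  set V := spinVariance M h n with hVdef
  set u := s / √V with hu
  have hfactor : ((exp (-s ^ 2 / 2) : ℝ) : ℂ)
      = ∏ i ∈ Finset.range n, ((exp (-((1 - M i ^ 2) * (u * h i) ^ 2) / 2) : ℝ) : ℂ) := by
    have hsum : s ^ 2 = ∑ i ∈ Finset.range n, (1 - M i ^ 2) * (u * h i) ^ 2 :=
      calc s ^ 2 = u ^ 2 * V := by rw [hu, div_pow, sq_sqrt hV.le, div_mul_cancel₀ _ hV.ne']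
        _ = _ := by
          rw [hVdef, spinVariance, Finset.mul_sum]
          exact Finset.sum_congr rfl fun i _ => by ring
    rw [← Complex.ofReal_prod, ← exp_sum, ← Finset.sum_div, Finset.sum_neg_distrib, ← hsum]
  have hle_one {i : ℕ} {t : ℝ} (ht : 0 ≤ t) : exp (-((1 - M i ^ 2) * t) / 2) ≤ 1 :=
    exp_le_one_iff.2 (by linarith [mul_nonneg (one_sub_sq_nonneg (hM i)) ht])
  rw [hfactor]
  calc _ ≤ ∑ i ∈ Finset.range n, ‖spinCharFun (M i) (u * h i)
          - (exp (-((1 - M i ^ 2) * (u * h i) ^ 2) / 2) : ℝ)‖ := by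
        refine norm_prod_sub_prod_le _ (fun i _ => ?_) fun i _ => ?_
        · exact (norm_spinCharFun_le _ _).trans (hle_one (sq_nonneg _))
        · rw [Complex.norm_real, norm_of_nonneg (exp_pos _).le]
          exact hle_one (sq_nonneg _)
    _ ≤ ∑ i ∈ Finset.range n, 33 * |u * h i| ^ 3 :=
        Finset.sum_le_sum fun i _ => norm_spinCharFun_sub_exp_le (hM i) _
    _ = 33 * |u| ^ 3 * ∑ i ∈ Finset.range n, |h i| ^ 3 := by
        rw [Finset.mul_sum]
        exact Finset.sum_congr rfl fun i _ => by rw [abs_mul]; ring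

namespace LocalLimitCondition

variable {M : ℕ → ℕ → ℝ} {h : ℕ → ℝ}

lemma exists_le_spinVariance (H : LocalLimitCondition M h) :
    ∃ κ > 0, ∀ᶠ n : ℕ in atTop, κ * n ≤ spinVariance (M n) h n := by
  obtain ⟨κ, hκ, hsine⟩ := H.sine_ge 1
  refine ⟨κ, hκ, ?_⟩
  filter_upwards [hsine] with n hn
  calc κ * n ≤ ∑ i ∈ Finset.range n, (1 - M n i ^ 2) * sin (h i) ^ 2 := by
        simpa using hn 1 (by simp)
    _ ≤ spinVariance (M n) h n := Finset.sum_le_sum fun i _ =>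
        mul_le_mul_of_nonneg_left (sq_le_sq.2 abs_sin_le_abs) (one_sub_sq_nonneg (H.mean_mem n i))

lemma exists_spinVariance_le (H : LocalLimitCondition M h) :
    ∃ K : ℝ, ∀ᶠ n : ℕ in atTop, spinVariance (M n) h n ≤ K * n := by
  obtain ⟨K, hK⟩ := H.cube_le
  have hterm (n i : ℕ) : (1 - M n i ^ 2) * h i ^ 2 ≤ 1 + |h i| ^ 3 := by
    have hsq : h i ^ 2 ≤ 1 + |h i| ^ 3 := by
      rw [← sq_abs]
      rcases le_total |h i| 1 with hle | hge
      · linarith [pow_le_one₀ (n := 2) (abs_nonneg (h i)) hle, pow_nonneg (abs_nonneg (h i)) 3]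
      · linarith [pow_le_pow_right₀ hge (show 2 ≤ 3 by norm_num)]
    nlinarith [sq_nonneg (M n i * h i)]
  refine ⟨1 + K, ?_⟩
  filter_upwards [hK] with n hn
  calc spinVariance (M n) h n ≤ ∑ i ∈ Finset.range n, (1 + |h i| ^ 3) :=
        Finset.sum_le_sum fun i _ => hterm n i
    _ ≤ (1 + K) * n := by
        rw [Finset.sum_add_distrib, Finset.sum_const, Finset.card_range, nsmul_one]
        linarith

lemma tendsto_spinVariance (H : LocalLimitCondition M h) :
    Tendsto (fun n => spinVariance (M n) h n) atTop atTop := by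
  obtain ⟨κ, hκ, hle⟩ := H.exists_le_spinVariance
  exact tendsto_atTop_mono' _ hle (tendsto_natCast_atTop_atTop.const_mul_atTop hκ)

lemma tendsto_prod_spinCharFun (H : LocalLimitCondition M h) (s : ℝ) :
    Tendsto (fun n => ∏ i ∈ Finset.range n,
        spinCharFun (M n i) (s / √(spinVariance (M n) h n) * h i)) atTop
      (𝓝 (exp (-s ^ 2 / 2) : ℝ)) := by
  obtain ⟨K, hK⟩ := H.cube_le
  obtain ⟨κ, hκ, hle⟩ := H.exists_le_spinVariance
  have hV := H.tendsto_spinVariance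
  rw [tendsto_iff_norm_sub_tendsto_zero]
  refine squeeze_zero' (g := fun n => 33 * |s| ^ 3 * (|K| / κ) * (√(spinVariance (M n) h n))⁻¹)
    (.of_forall fun _ => norm_nonneg _) ?_ ?_
  · filter_upwards [hK, hle, hV.eventually_gt_atTop 0] with n hKn hκn hVpos
    refine (norm_prod_spinCharFun_sub_exp_le (H.mean_mem n) hVpos s).trans ?_
    set V := spinVariance (M n) h n
    have hcube : ∑ i ∈ Finset.range n, |h i| ^ 3 ≤ |K| / κ * V :=
      calc ∑ i ∈ Finset.range n, |h i| ^ 3 ≤ |K| * n :=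
            hKn.trans (mul_le_mul_of_nonneg_right (le_abs_self K) n.cast_nonneg)
        _ = |K| / κ * (κ * n) := by field_simp
        _ ≤ |K| / κ * V := by gcongr
    calc 33 * |s / √V| ^ 3 * ∑ i ∈ Finset.range n, |h i| ^ 3
        ≤ 33 * |s / √V| ^ 3 * (|K| / κ * V) := by gcongr
      _ = 33 * |s| ^ 3 * (|K| / κ) * (√V)⁻¹ := by
        rw [abs_div, abs_of_nonneg (sqrt_nonneg V), div_pow]
        nth_rewrite 2 [← sq_sqrt hVpos.le]
        field_simp
  · simpa using (tendsto_inv_atTop_zero.comp (tendsto_sqrt_atTop.comp hV)).const_mul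
      (33 * |s| ^ 3 * (|K| / κ))

lemma exists_norm_prod_spinCharFun_le (H : LocalLimitCondition M h) (T : ℝ) :
    ∃ β > 0, ∀ᶠ n in atTop, ∀ s, |s / √(spinVariance (M n) h n)| ≤ T →
      ‖∏ i ∈ Finset.range n, spinCharFun (M n i) (s / √(spinVariance (M n) h n) * h i)‖
        ≤ exp (-β * s ^ 2) := by
  obtain ⟨K, hK⟩ := H.exists_spinVariance_le
  obtain ⟨κ, hκ, hsine⟩ := H.sine_ge T
  have hL : 0 < |K| + 1 := by positivity
  refine ⟨κ / (|K| + 1) / 2, by positivity, ?_⟩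
  filter_upwards [hK, hsine, H.tendsto_spinVariance.eventually_gt_atTop 0] with n hKn hκn hVpos s hs
  set V := spinVariance (M n) h n
  refine (norm_prod_spinCharFun_le _ _ _ _).trans (exp_le_exp.2 ?_)
  have hVle : V ≤ (|K| + 1) * n :=
    hKn.trans (mul_le_mul_of_nonneg_right (by linarith [le_abs_self K]) n.cast_nonneg)
  have hlower : κ / (|K| + 1) * s ^ 2 ≤ κ * n * (s / √V) ^ 2 := by
    rw [div_pow, sq_sqrt hVpos.le, div_mul_eq_mul_div, mul_div_assoc',
      div_le_div_iff₀ hL hVpos]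
    nlinarith [mul_le_mul_of_nonneg_left hVle (mul_nonneg hκ.le (sq_nonneg s))]
  linarith [hκn _ hs]

lemma tendsto_fourierIntegrand (H : LocalLimitCondition M h) {d : ℕ → ℝ}
    (hd : Tendsto (fun n => d n / √(spinVariance (M n) h n)) atTop (𝓝 0))
    {ψ : ℝ → ℝ} (hψ : Continuous ψ) (s : ℝ) :
    Tendsto (fun n => fourierIntegrand ψ (d n) (M n) h n (s / √(spinVariance (M n) h n))) atTop
      (𝓝 (ψ 0 * (exp (-s ^ 2 / 2) : ℝ))) := by
  have hs : Tendsto (fun n => s / √(spinVariance (M n) h n)) atTop (𝓝 0) :=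
    tendsto_const_nhds.div_atTop (tendsto_sqrt_atTop.comp H.tendsto_spinVariance)
  have htest : Tendsto (fun n => (ψ (s / √(spinVariance (M n) h n)) : ℂ)) atTop (𝓝 (ψ 0)) :=
    ((Complex.continuous_ofReal.comp hψ).tendsto 0).comp hs
  have hphase : Tendsto
      (fun n => Complex.exp ((s / √(spinVariance (M n) h n) * d n : ℝ) * Complex.I)) atTop
      (𝓝 1) := by
    have hzero : Tendsto (fun n => s / √(spinVariance (M n) h n) * d n) atTop (𝓝 0) := by
      simpa only [mul_zero, mul_div_assoc', div_mul_eq_mul_div] using hd.const_mul s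
    have hcont : Continuous fun x : ℝ => Complex.exp (x * Complex.I) := by fun_prop
    have hlim := (hcont.tendsto 0).comp hzero
    rwa [Complex.ofReal_zero, zero_mul, Complex.exp_zero] at hlim
  simpa only [fourierIntegrand, one_mul] using htest.mul (hphase.mul (H.tendsto_prod_spinCharFun s))

lemma tendsto_integral_fourierIntegrand (H : LocalLimitCondition M h) {d : ℕ → ℝ}
    (hd : Tendsto (fun n => d n / √(spinVariance (M n) h n)) atTop (𝓝 0))
    {ψ : ℝ → ℝ} (hψ : Continuous ψ) (hψc : HasCompactSupport ψ) :
    Tendsto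
      (fun n => ∫ s : ℝ, fourierIntegrand ψ (d n) (M n) h n (s / √(spinVariance (M n) h n))) atTop
      (𝓝 (∫ s : ℝ, (ψ 0 : ℂ) * (exp (-s ^ 2 / 2) : ℝ))) := by
  obtain ⟨T, -, hTψ⟩ := hψc.exists_pos_le_norm
  obtain ⟨B, hB⟩ := hψc.exists_bound_of_continuous hψ
  obtain ⟨β, hβ, hdecay⟩ := H.exists_norm_prod_spinCharFun_le T
  have hB0 : 0 ≤ B := (norm_nonneg _).trans (hB 0)
  refine tendsto_integral_filter_of_dominated_convergence (fun s => B * exp (-β * s ^ 2))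
    (.of_forall fun n => ?_) ?_ ((integrable_exp_neg_mul_sq hβ).const_mul B)
    (.of_forall (H.tendsto_fourierIntegrand hd hψ))
  · have (i : ℕ) := continuous_spinCharFun (M n i)
    unfold fourierIntegrand
    exact Continuous.aestronglyMeasurable (by fun_prop)
  · filter_upwards [hdecay] with n hn
    refine .of_forall fun s => ?_
    rw [fourierIntegrand]
    rcases le_or_gt |s / √(spinVariance (M n) h n)| T with hle | hgt
    · rw [norm_mul, norm_mul, Complex.norm_exp_ofReal_mul_I, one_mul, Complex.norm_real]
      exact mul_le_mul (hB _) (hn s hle) (norm_nonneg _) hB0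
    · rw [hTψ _ hgt.le, Complex.ofReal_zero, zero_mul, norm_zero]
      positivity

lemma tendsto_sqrt_mul_integral_fourierIntegrand (H : LocalLimitCondition M h) {d : ℕ → ℝ}
    (hd : Tendsto (fun n => d n / √(spinVariance (M n) h n)) atTop (𝓝 0))
    {ψ : ℝ → ℝ} (hψ : Continuous ψ) (hψc : HasCompactSupport ψ) :
    Tendsto (fun n => (√(2 * π * spinVariance (M n) h n) : ℂ)
        * ∫ u : ℝ, fourierIntegrand ψ (d n) (M n) h n u) atTop (𝓝 (2 * π * ψ 0)) := by
  have hgauss : ∫ s : ℝ, exp (-s ^ 2 / 2) = √(2 * π) := by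
    rw [show 2 * π = π / (1 / 2) by ring, ← integral_gaussian]
    congr 1 with s
    ring_nf
  have hlim : (√(2 * π) : ℂ) * ∫ s : ℝ, (ψ 0 : ℂ) * (exp (-s ^ 2 / 2) : ℝ) = 2 * π * ψ 0 := by
    rw [integral_const_mul, integral_complex_ofReal, hgauss, mul_left_comm, ← Complex.ofReal_mul,
      mul_self_sqrt (by positivity)]
    push_cast
    ring
  rw [← hlim]
  refine ((H.tendsto_integral_fourierIntegrand hd hψ hψc).const_mul _).congr fun n => ?_
  rw [Measure.integral_comp_div, abs_of_nonneg (sqrt_nonneg _), Complex.real_smul,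
    ← mul_assoc, ← Complex.ofReal_mul, ← sqrt_mul (by positivity)]

end LocalLimitCondition

end LocalLimit

section AtomicMeasure

/-- The measure with atoms of mass `w i` at the points `x i`; negative masses count as `0`. -/
def atomicMeasure {ι : Type*} [Fintype ι] (w x : ι → ℝ) : Measure ℝ :=
  ∑ i, ENNReal.ofReal (w i) • Measure.dirac (x i)

variable {ι : Type*} [Fintype ι] {w : ι → ℝ}

instance (w x : ι → ℝ) : IsFiniteMeasure (atomicMeasure w x) where
  measure_univ_lt_top := by
    rw [atomicMeasure, Measure.finsetSum_apply]
    exact ENNReal.sum_lt_top.2 fun i _ => by simp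

lemma integral_atomicMeasure {E : Type*} [NormedAddCommGroup E] [NormedSpace ℝ E] [CompleteSpace E]
    (hw : ∀ i, 0 ≤ w i) (x : ι → ℝ) (f : ℝ → E) :
    ∫ y, f y ∂atomicMeasure w x = ∑ i, w i • f (x i) := by
  rw [atomicMeasure, integral_finsetSum_measure]
  · simp only [integral_smul_measure, integral_dirac, ENNReal.toReal_ofReal (hw _)]
  · exact fun i _ => (integrable_dirac (by simp)).smul_measure ENNReal.ofReal_ne_top

end AtomicMeasure

section ExponentialWeight

lemma abs_exp_sub_one_le_exp_abs_sub_one (y : ℝ) : |exp y - 1| ≤ exp |y| - 1 := by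
  rw [abs_le]
  constructor
  · linarith [add_one_le_exp y, add_one_le_exp |y|, neg_abs_le y]
  · linarith [exp_le_exp.2 (le_abs_self y)]

lemma abs_exp_mul_sub_exp_mul_le {x R : ℝ} (hx : |x| ≤ R) (a b : ℝ) :
    |exp (-(a * x)) - exp (-(b * x))| ≤ (exp (|b - a| * R) - 1) * exp (-(b * x)) :=
  calc |exp (-(a * x)) - exp (-(b * x))| = |exp ((b - a) * x) - 1| * exp (-(b * x)) := by
        rw [← abs_of_pos (exp_pos (-(b * x))), ← abs_mul, abs_of_pos (exp_pos _), sub_mul, one_mul,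
          ← exp_add]
        ring_nf
    _ ≤ (exp (|b - a| * R) - 1) * exp (-(b * x)) := by
        gcongr
        refine (abs_exp_sub_one_le_exp_abs_sub_one _).trans ?_
        rw [abs_mul]
        gcongr

lemma tendsto_integral_mul_exp_of_tendsto_integral {ν : ℕ → Measure ℝ} [∀ n, IsFiniteMeasure (ν n)]
    (hν : ∀ f : ℝ → ℝ, Continuous f → HasCompactSupport f →
      Tendsto (fun n => ∫ x, f x ∂ν n) atTop (𝓝 (∫ x, f x)))
    {Λ : ℕ → ℝ} {l : ℝ} (hΛ : Tendsto Λ atTop (𝓝 l))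
    {f : ℝ → ℝ} (hf : Continuous f) (hfc : HasCompactSupport f) :
    Tendsto (fun n => ∫ x, f x * exp (-(Λ n * x)) ∂ν n) atTop
      (𝓝 (∫ x, f x * exp (-(l * x)))) := by
  obtain ⟨R, -, hfR⟩ := hfc.exists_pos_le_norm
  have habs : HasCompactSupport fun x => |f x| := hfc.comp_left abs_zero
  have hfactor : Tendsto (fun n => exp (|l - Λ n| * R) - 1) atTop (𝓝 0) := by
    have hcont : Continuous fun y => exp (|l - y| * R) - 1 := by fun_prop
    simpa [Function.comp_def] using (hcont.tendsto l).comp hΛ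
  have hbound := hfactor.mul
    (hν (fun x => |f x| * exp (-(l * x))) (by fun_prop) habs.mul_right)
  rw [zero_mul] at hbound
  have hint (c : ℝ) (n : ℕ) : Integrable (fun x => f x * exp (-(c * x))) (ν n) :=
    Continuous.integrable_of_hasCompactSupport (by fun_prop) hfc.mul_right
  have hdiff : Tendsto (fun n => ∫ x, f x * exp (-(Λ n * x)) ∂ν n
      - ∫ x, f x * exp (-(l * x)) ∂ν n) atTop (𝓝 0) := by
    refine squeeze_zero_norm (fun n => ?_) hbound
    rw [← integral_sub (hint _ n) (hint _ n), ← integral_const_mul]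
    have hint_abs : Integrable (fun x => |f x| * exp (-(l * x))) (ν n) :=
      Continuous.integrable_of_hasCompactSupport (by fun_prop) habs.mul_right
    refine norm_integral_le_of_norm_le (hint_abs.const_mul _) (Eventually.of_forall fun x => ?_)
    rcases le_or_gt R |x| with hx | hx
    · simp [hfR x hx]
    · rw [← mul_sub, norm_mul, norm_eq_abs, norm_eq_abs, mul_left_comm]
      exact mul_le_mul_of_nonneg_left (abs_exp_mul_sub_exp_mul_le hx.le _ _) (abs_nonneg _)
  simpa using hdiff.add (hν (fun x => f x * exp (-(l * x))) (by fun_prop) hfc.mul_right)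

end ExponentialWeight

section TiltedCylinders

/-- The probability of the cylinder `[τ]` for independent spins of means `M i`; this is `Pcyl m`
when all means are `m`. -/
def spinWeight (M : ℕ → ℝ) (n : ℕ) (τ : Fin n → Bool) : ℝ :=
  ∏ i : Fin n, (1 + M i * spin (τ i)) / 2

/-- The law of `Hn m n h - a` for independent spins of means `M i`, multiplied by the normalisation
`√(2πV)` of the local limit theorem. -/
def localLimitLaw (m : ℝ) (M h : ℕ → ℝ) (a : ℝ) (n : ℕ) : Measure ℝ :=
  atomicMeasure (fun τ => √(2 * π * spinVariance M h n) * spinWeight M n τ)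
    (fun τ => Hn m n h τ - a)

instance (m : ℝ) (M h : ℕ → ℝ) (a : ℝ) (n : ℕ) : IsFiniteMeasure (localLimitLaw m M h a n) :=
  inferInstanceAs (IsFiniteMeasure (atomicMeasure _ _))

variable {m : ℝ} {M h : ℕ → ℝ}

lemma spinWeight_nonneg (hM : ∀ i, M i ∈ Icc (-1) 1) (n : ℕ) (τ : Fin n → Bool) :
    0 ≤ spinWeight M n τ := by
  refine Finset.prod_nonneg fun i _ => ?_
  have := hM i
  cases τ i <;> simp only [spin, Bool.false_eq_true, if_true, if_false] <;>
    linarith [this.1, this.2]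

lemma integral_localLimitLaw {E : Type*} [NormedAddCommGroup E] [NormedSpace ℝ E] [CompleteSpace E]
    (hM : ∀ i, M i ∈ Icc (-1) 1) (m a : ℝ) (n : ℕ) (f : ℝ → E) :
    ∫ x, f x ∂localLimitLaw m M h a n = ∑ τ : Fin n → Bool,
      (√(2 * π * spinVariance M h n) * spinWeight M n τ) • f (Hn m n h τ - a) :=
  integral_atomicMeasure (fun τ => mul_nonneg (sqrt_nonneg _) (spinWeight_nonneg hM n τ)) _ f

lemma prod_spinCharFun_eq_sum (M h : ℕ → ℝ) (n : ℕ) (u : ℝ) :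
    ∏ i ∈ Finset.range n, spinCharFun (M i) (u * h i) = ∑ τ : Fin n → Bool, spinWeight M n τ
      * Complex.exp ((∑ i : Fin n, u * h i * (spin (τ i) - M i) : ℝ) * Complex.I) := by
  have hsite (i : Fin n) : spinCharFun (M i) (u * h i) = ∑ b : Bool,
      ((1 + M i * spin b) / 2 : ℝ) * Complex.exp ((u * h i * (spin b - M i) : ℝ) * Complex.I) := by
    simp [spinCharFun, spin, sub_eq_add_neg]
  rw [Finset.prod_range, Finset.prod_congr rfl fun i _ => hsite i, Finset.prod_univ_sum,
    Fintype.piFinset_univ]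
  refine Finset.sum_congr rfl fun τ _ => ?_
  rw [Finset.prod_mul_distrib, ← Complex.exp_sum, ← Finset.sum_mul, ← Complex.ofReal_prod,
    ← Complex.ofReal_sum, spinWeight]

lemma charFun_localLimitLaw (hM : ∀ i, M i ∈ Icc (-1) 1) (m a : ℝ) (n : ℕ) (u : ℝ) :
    charFun (localLimitLaw m M h a n) u = √(2 * π * spinVariance M h n)
      * (Complex.exp ((u * (∑ i ∈ Finset.range n, h i * (M i - m) - a) : ℝ) * Complex.I)
        * ∏ i ∈ Finset.range n, spinCharFun (M i) (u * h i)) := by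
  rw [charFun_apply_real, integral_localLimitLaw hM, prod_spinCharFun_eq_sum, Finset.mul_sum,
    Finset.mul_sum]
  refine Finset.sum_congr rfl fun τ _ => ?_
  have hcentre : u * (Hn m n h τ - a) = u * (∑ i ∈ Finset.range n, h i * (M i - m) - a)
      + ∑ i : Fin n, u * h i * (spin (τ i) - M i) := by
    rw [Hn, Finset.sum_range, mul_sub, mul_sub, sub_add_eq_add_sub, Finset.mul_sum, Finset.mul_sum,
      ← Finset.sum_add_distrib]
    exact congrArg (· - u * a) (Finset.sum_congr rfl fun i _ => by ring)
  rw [← Complex.ofReal_mul, hcentre, Complex.ofReal_add, add_mul, Complex.exp_add,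
    Complex.real_smul, Complex.ofReal_mul]
  ring

theorem LocalLimitCondition.tendsto_integral_localLimitLaw {M : ℕ → ℕ → ℝ}
    (H : LocalLimitCondition M h) {a : ℕ → ℝ}
    (ha : Tendsto (fun n => (∑ i ∈ Finset.range n, h i * (M n i - m) - a n)
      / √(spinVariance (M n) h n)) atTop (𝓝 0))
    {f : ℝ → ℝ} (hf : Continuous f) (hfc : HasCompactSupport f) :
    Tendsto (fun n => ∫ x, f x ∂localLimitLaw m (M n) h (a n) n) atTop (𝓝 (∫ x, f x)) := by
  refine tendsto_integral_volume_of_tendsto_charFun (fun ψ hψ hψc => ?_) hf hfc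
  refine (H.tendsto_sqrt_mul_integral_fourierIntegrand ha hψ hψc).congr fun n => ?_
  rw [← integral_const_mul]
  refine integral_congr_ae (Eventually.of_forall fun u => ?_)
  simp only [fourierIntegrand, charFun_localLimitLaw (H.mean_mem n)]
  ring

lemma prior_eq_tilted_mul_exp (hm : m ∈ Ioo (-1) 1) (x : ℝ) (b : Bool) :
    (1 + m * spin b) / 2
      = (1 + tiltMean m x * spin b) / 2 * exp (gfun m x - x * (spin b - m)) := by
  have hZ := tiltZ_pos hm x
  have hexp : exp (gfun m x - x * (spin b - m)) = tiltZ m x * exp (-(x * spin b)) := by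
    rw [gfun_eq_log_tiltZ hm, ← exp_log hZ, ← exp_add, log_exp]
    ring_nf
  have hnum : tiltZ m x * (1 + tiltMean m x * spin b) = (1 + m * spin b) * exp (x * spin b) := by
    rw [mul_add, ← mul_assoc, tiltMean, mul_div_cancel₀ _ hZ.ne', tiltZ]
    cases b <;> simp only [spin, Bool.false_eq_true, if_true, if_false, mul_one, mul_neg]
      <;> rw [cosh_eq, sinh_eq] <;> ring
  rw [hexp, ← mul_assoc, div_mul_eq_mul_div, mul_comm _ (tiltZ m x), hnum, div_mul_eq_mul_div,
    mul_assoc, ← exp_add, add_neg_cancel, exp_zero, mul_one]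

lemma Pcyl_eq_spinWeight_mul_exp (hm : m ∈ Ioo (-1) 1) (l : ℝ) (h : ℕ → ℝ) (n : ℕ)
    (τ : Fin n → Bool) :
    Pcyl m n τ = spinWeight (fun i => tiltMean m (l * h i)) n τ
      * exp (∑ i ∈ Finset.range n, gfun m (l * h i) - l * Hn m n h τ) := by
  rw [Pcyl, spinWeight, Hn, Finset.sum_range, Finset.mul_sum, ← Finset.sum_sub_distrib, exp_sum,
    ← Finset.prod_mul_distrib]
  refine Finset.prod_congr rfl fun i _ => ?_
  rw [prior_eq_tilted_mul_exp hm (l * h i), mul_assoc l]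

end TiltedCylinders

section Centering

/-- The centering `A_n` of the theorem: it turns the tilt by `l` of `localLimitLaw` into the factor
`exp C`. -/
def centering (m : ℝ) (h : ℕ → ℝ) (n : ℕ) (l C : ℝ) : ℝ :=
  (C + ∑ i ∈ Finset.range n, gfun m (l * h i)
    - log √(2 * π * spinVariance (fun i => tiltMean m (l * h i)) h n)) / l

variable {m : ℝ} {h : ℕ → ℝ}

lemma sum_tiltMean_sub_centering {n : ℕ} {l C : ℝ} (hl : l ≠ 0)
    (hC : ∑ i ∈ Finset.range n, tiltEntropy m (l * h i) = C) :
    ∑ i ∈ Finset.range n, h i * (tiltMean m (l * h i) - m) - centering m h n l C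
      = log √(2 * π * spinVariance (fun i => tiltMean m (l * h i)) h n) / l := by
  have hlegendre : C + ∑ i ∈ Finset.range n, gfun m (l * h i)
      = l * ∑ i ∈ Finset.range n, h i * (tiltMean m (l * h i) - m) := by
    rw [← hC, ← Finset.sum_add_distrib, Finset.mul_sum]
    exact Finset.sum_congr rfl fun i _ => by rw [tiltEntropy]; ring
  rw [centering, hlegendre, sub_div, mul_div_cancel_left₀ _ hl, sub_sub_cancel]

lemma integral_localLimitLaw_centering (hm : m ∈ Ioo (-1) 1) {n : ℕ} {l : ℝ} (hl : l ≠ 0)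
    (hV : 0 < spinVariance (fun i => tiltMean m (l * h i)) h n) (C : ℝ) (f : ℝ → ℝ) :
    ∫ x, f x * exp (-(l * x))
        ∂localLimitLaw m (fun i => tiltMean m (l * h i)) h (centering m h n l C) n
      = exp C * ∑ τ : Fin n → Bool, Pcyl m n τ * f (Hn m n h τ - centering m h n l C) := by
  set A := centering m h n l C with hA
  have hscale : √(2 * π * spinVariance (fun i => tiltMean m (l * h i)) h n)
      = exp (C + ∑ i ∈ Finset.range n, gfun m (l * h i) - l * A) := by
    rw [hA, centering, mul_div_cancel₀ _ hl, sub_sub_cancel, exp_log (sqrt_pos.2 (by positivity))]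
  rw [integral_localLimitLaw fun i => Ioo_subset_Icc_self (tiltMean_mem_Ioo hm _), Finset.mul_sum]
  refine Finset.sum_congr rfl fun τ _ => ?_
  have hexp : exp (C + ∑ i ∈ Finset.range n, gfun m (l * h i) - l * A)
        * exp (-(l * (Hn m n h τ - A)))
      = exp C * exp (∑ i ∈ Finset.range n, gfun m (l * h i) - l * Hn m n h τ) := by
    rw [← exp_add, ← exp_add]
    ring_nf
  rw [Pcyl_eq_spinWeight_mul_exp hm l h n τ, hscale, smul_eq_mul]
  linear_combination spinWeight (fun i => tiltMean m (l * h i)) n τ * f (Hn m n h τ - A) * hexp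

lemma LocalLimitCondition.tendsto_log_div_sqrt_spinVariance {M : ℕ → ℕ → ℝ}
    (H : LocalLimitCondition M h) :
    Tendsto (fun n => log √(2 * π * spinVariance (M n) h n) / √(spinVariance (M n) h n))
      atTop (𝓝 0) := by
  have hlog : Tendsto (fun y => log y / y) atTop (𝓝 0) :=
    isLittleO_log_id_atTop.tendsto_div_nhds_zero
  have htop : Tendsto (fun n => √(2 * π * spinVariance (M n) h n)) atTop atTop :=
    tendsto_sqrt_atTop.comp (H.tendsto_spinVariance.const_mul_atTop two_pi_pos)
  have := (hlog.comp htop).mul_const √(2 * π)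
  rw [zero_mul] at this
  refine this.congr fun n => ?_
  rw [Function.comp_apply, sqrt_mul two_pi_pos.le (spinVariance (M n) h n), div_mul_eq_mul_div,
    mul_comm √(2 * π), mul_div_mul_right _ _ (sqrt_pos.2 two_pi_pos).ne']

theorem tendsto_exp_mul_sum_centering (hm : m ∈ Ioo (-1) 1) {Λ C : ℕ → ℝ} {l : ℝ} (hl : 0 < l)
    (hΛ : Tendsto Λ atTop (𝓝 l))
    (hC : ∀ᶠ n in atTop, ∑ i ∈ Finset.range n, tiltEntropy m (Λ n * h i) = C n)
    (H : LocalLimitCondition (fun n i => tiltMean m (Λ n * h i)) h)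
    {f : ℝ → ℝ} (hf : Continuous f) (hfc : HasCompactSupport f) :
    Tendsto (fun n => exp (C n)
        * ∑ τ : Fin n → Bool, Pcyl m n τ * f (Hn m n h τ - centering m h n (Λ n) (C n)))
      atTop (𝓝 (∫ x, f x * exp (-(l * x)))) := by
  have hΛ_ne : ∀ᶠ n in atTop, Λ n ≠ 0 := hΛ.eventually_ne hl.ne'
  have hcentre := H.tendsto_log_div_sqrt_spinVariance.mul (hΛ.inv₀ hl.ne')
  rw [zero_mul] at hcentre
  have hlimit := tendsto_integral_mul_exp_of_tendsto_integral (fun φ hφ hφc =>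
    H.tendsto_integral_localLimitLaw (m := m) (a := fun n => centering m h n (Λ n) (C n))
      (hcentre.congr' ?_) hφ hφc) hΛ hf hfc
  · refine hlimit.congr' ?_
    filter_upwards [hΛ_ne, H.tendsto_spinVariance.eventually_gt_atTop 0] with n hΛn hV
    exact integral_localLimitLaw_centering hm hΛn hV (C n) f
  · filter_upwards [hΛ_ne, hC] with n hΛn hCn
    rw [sum_tiltMean_sub_centering hΛn hCn, div_right_comm, div_eq_mul_inv _ (Λ n)]

end Centering

section NonLattice

/-- A measure on `ℝ` is non-lattice if it is not concentrated on the multiples of any `a`; the case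
`a = 0` excludes measures concentrated at `0`. -/
def NonLattice (μ : Measure ℝ) : Prop := ∀ a, ¬ ∀ᵐ x ∂μ, x ∈ AddSubgroup.zmultiples a

variable {μ : Measure ℝ}

lemma nonLattice_of_not_mutuallySingular (hμ : ¬ μ.MutuallySingular volume) : NonLattice μ := by
  intro a hlattice
  have hcount : (AddSubgroup.zmultiples a : Set ℝ).Countable := countable_range fun k : ℤ => k • a
  exact hμ ⟨_, hcount.measurableSet.compl, hlattice,
    by rw [compl_compl]; exact hcount.measure_zero _⟩

lemma NonLattice.frequently_ne_zero (hμ : NonLattice μ) : ∃ᵐ x ∂μ, x ≠ 0 := by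
  refine fun hzero => hμ 0 (hzero.mono fun x hx => ?_)
  rw [not_not.1 hx]
  exact zero_mem _

lemma mul_sinc_mul (t x : ℝ) : t * (x * sinc (t * x)) = sin (t * x) := by
  rcases eq_or_ne (t * x) 0 with h | h
  · rw [← mul_assoc, h, zero_mul, sin_zero]
  · rw [← mul_assoc, sinc_of_ne_zero h, mul_div_cancel₀ _ h]

-- For `t = 0` the lattice is `{0}`, since `π / 0 = 0`.
lemma mem_zmultiples_pi_div_of_mul_sinc_eq_zero {t x : ℝ} (hx : x * sinc (t * x) = 0) :
    x ∈ AddSubgroup.zmultiples (π / t) := by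
  rcases eq_or_ne t 0 with rfl | ht
  · simpa using hx
  · obtain ⟨k, hk⟩ := sin_eq_zero_iff.1 (by rw [← mul_sinc_mul, hx, mul_zero] : sin (t * x) = 0)
    refine AddSubgroup.mem_zmultiples_iff.2 ⟨k, ?_⟩
    rw [zsmul_eq_mul, ← mul_div_assoc, hk, mul_div_cancel_left₀ _ ht]

lemma NonLattice.exists_mem_support_mul_sinc_ne_zero (hμ : NonLattice μ) (t : ℝ) :
    ∃ x ∈ μ.support, x * sinc (t * x) ≠ 0 := by
  have hfreq : ∃ᵐ x ∂μ, x * sinc (t * x) ≠ 0 := fun hzero => hμ (π / t) <| hzero.mono fun x hx =>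
    mem_zmultiples_pi_div_of_mul_sinc_eq_zero (not_not.1 hx)
  obtain ⟨x, hx, hsupp⟩ := (hfreq.and_eventually Measure.support_mem_ae).exists
  exact ⟨x, hsupp, hx⟩

lemma NonLattice.exists_Ioo_rat_sin_sq_ge (hμ : NonLattice μ) (t₀ : ℝ) :
    ∃ κ > 0, ∃ a b : ℚ, 0 < μ (Ioo a b) ∧
      ∀ᶠ t in 𝓝 t₀, ∀ x ∈ Ioo (a : ℝ) b, κ * t ^ 2 ≤ sin (t * x) ^ 2 := by
  obtain ⟨x₀, hx₀, hne⟩ := hμ.exists_mem_support_mul_sinc_ne_zero t₀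
  have hpos : 0 < (x₀ * sinc (t₀ * x₀)) ^ 2 := by positivity
  have hcont : Continuous fun p : ℝ × ℝ => (p.2 * sinc (p.1 * p.2)) ^ 2 := by fun_prop
  have hnear : ∀ᶠ p in 𝓝 t₀ ×ˢ 𝓝 x₀,
      (x₀ * sinc (t₀ * x₀)) ^ 2 / 2 < (p.2 * sinc (p.1 * p.2)) ^ 2 := by
    rw [← nhds_prod_eq]
    exact hcont.continuousAt.eventually (lt_mem_nhds (half_lt_self hpos))
  obtain ⟨nearT, hT, nearX, hX, hle⟩ := eventually_prod_iff.1 hnear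
  obtain ⟨U, hU, hxU, hUX⟩ := Real.isTopologicalBasis_Ioo_rat.mem_nhds_iff.1 hX
  simp only [mem_iUnion, mem_singleton_iff, exists_prop] at hU
  obtain ⟨a, b, -, rfl⟩ := hU
  refine ⟨_, half_pos hpos, a, b,
    (Measure.mem_support_iff_forall x₀).1 hx₀ _ (isOpen_Ioo.mem_nhds hxU), ?_⟩
  filter_upwards [hT] with t ht x hx
  rw [← mul_sinc_mul, mul_comm, mul_pow t]
  exact mul_le_mul_of_nonneg_left (hle ht (hUX hx)).le (sq_nonneg t)

end NonLattice

section EmpiricalMeans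

/-- The averages of `f` along the sequence `h` converge to the mean of `f` under `μ`. -/
def HasEmpiricalMean (μ : Measure ℝ) (h : ℕ → ℝ) (f : ℝ → ℝ) : Prop :=
  Tendsto (fun n : ℕ => (∑ i ∈ Finset.range n, f (h i)) / n) atTop (𝓝 (∫ x, f x ∂μ))

variable {μ : Measure ℝ} {h : ℕ → ℝ}

lemma HasEmpiricalMean.eventually_le {f : ℝ → ℝ} (H : HasEmpiricalMean μ h f) {K : ℝ}
    (hK : ∫ x, f x ∂μ < K) : ∀ᶠ n : ℕ in atTop, ∑ i ∈ Finset.range n, f (h i) ≤ K * n := by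
  filter_upwards [H.eventually_le_const hK, eventually_gt_atTop 0] with n hn hpos
  exact (div_le_iff₀ (Nat.cast_pos.2 hpos)).1 hn

lemma HasEmpiricalMean.eventually_ge {f : ℝ → ℝ} (H : HasEmpiricalMean μ h f) {K : ℝ}
    (hK : K < ∫ x, f x ∂μ) : ∀ᶠ n : ℕ in atTop, K * n ≤ ∑ i ∈ Finset.range n, f (h i) := by
  filter_upwards [H.eventually_const_le hK, eventually_gt_atTop 0] with n hn hpos
  exact (le_div_iff₀ (Nat.cast_pos.2 hpos)).1 hn

lemma ae_hasEmpiricalMean {Ω : Type*} [MeasurableSpace Ω] {P : Measure Ω} {X : ℕ → Ω → ℝ}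
    (hmeas : ∀ i, Measurable (X i)) (hindep : iIndepFun X P) (hlaw : ∀ i, P.map (X i) = μ)
    {f : ℝ → ℝ} (hf : Measurable f) (hint : Integrable f μ) :
    ∀ᵐ ω ∂P, HasEmpiricalMean μ (fun i => X i ω) f := by
  have hmean : ∫ ω, f (X 0 ω) ∂P = ∫ x, f x ∂μ := by
    rw [← hlaw 0, integral_map (hmeas 0).aemeasurable hf.aestronglyMeasurable]
  have hstrong := strong_law_ae_real (μ := P) (fun i ω => f (X i ω))
    (Integrable.comp_measurable (by rwa [hlaw 0]) (hmeas 0))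
    (fun i j hij => (hindep.indepFun hij).comp hf hf)
    (fun i => IdentDistrib.comp (u := f) ⟨(hmeas i).aemeasurable, (hmeas 0).aemeasurable,
      by rw [hlaw, hlaw]⟩ hf)
  rwa [hmean] at hstrong

lemma HasEmpiricalMean.exists_le_sum_mul [IsFiniteMeasure μ] {s : Set ℝ} (hs : MeasurableSet s)
    (H : HasEmpiricalMean μ h (s.indicator 1)) (hμs : 0 < μ s)
    {w : ℕ → ℕ → ℝ} (hw : ∀ n i, 0 ≤ w n i)
    {ρ : ℝ} (hρ : 0 < ρ) (hw_pos : ∀ n i, h i ∈ s → ρ ≤ w n i) :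
    ∃ δ > 0, ∀ᶠ n : ℕ in atTop, ∀ k : ℝ, 0 ≤ k → ∀ g : ℝ → ℝ, (∀ x, 0 ≤ g x) →
      (∀ x ∈ s, k ≤ g x) → δ * n * k ≤ ∑ i ∈ Finset.range n, w n i * g (h i) := by
  set p := ∫ x, s.indicator (1 : ℝ → ℝ) x ∂μ with hp
  have hpos : 0 < p := by
    rw [hp, integral_indicator_one hs]
    exact ENNReal.toReal_pos hμs.ne' (measure_ne_top _ _)
  refine ⟨ρ * (p / 2), by positivity, ?_⟩
  filter_upwards [H.eventually_ge (half_lt_self hpos)] with n hn k hk g hg hgk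
  calc ρ * (p / 2) * n * k = ρ * k * (p / 2 * n) := by ring
    _ ≤ ρ * k * ∑ i ∈ Finset.range n, s.indicator 1 (h i) := by gcongr
    _ = ∑ i ∈ Finset.range n, ρ * k * s.indicator 1 (h i) := Finset.mul_sum ..
    _ ≤ ∑ i ∈ Finset.range n, w n i * g (h i) := by
        refine Finset.sum_le_sum fun i _ => ?_
        by_cases hi : h i ∈ s
        · rw [indicator_of_mem hi, Pi.one_apply, mul_one]
          exact mul_le_mul (hw_pos n i hi) (hgk _ hi) hk (hw n i)
        · rw [indicator_of_notMem hi, mul_zero]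
          exact mul_nonneg (hw n i) (hg _)

theorem NonLattice.exists_le_sum_mul_sin_sq [IsFiniteMeasure μ] (hμ : NonLattice μ)
    (hfreq : ∀ a b : ℚ, HasEmpiricalMean μ h ((Ioo (a : ℝ) b).indicator 1))
    {w : ℕ → ℕ → ℝ} (hw : ∀ n i, 0 ≤ w n i)
    (hw_pos : ∀ R, ∃ ρ > 0, ∀ n i, |h i| ≤ R → ρ ≤ w n i) (T : ℝ) :
    ∃ κ > 0, ∀ᶠ n : ℕ in atTop, ∀ u, |u| ≤ T →
      κ * n * u ^ 2 ≤ ∑ i ∈ Finset.range n, w n i * sin (u * h i) ^ 2 := by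
  simp only [abs_le, ← mem_Icc]
  refine isCompact_Icc.induction_on (p := fun S => ∃ κ > 0, ∀ᶠ n : ℕ in atTop, ∀ u ∈ S,
    κ * n * u ^ 2 ≤ ∑ i ∈ Finset.range n, w n i * sin (u * h i) ^ 2) ⟨1, one_pos, by simp⟩ ?_ ?_ ?_
  · rintro S S' hS ⟨κ, hκ, H⟩
    exact ⟨κ, hκ, H.mono fun n hn u hu => hn u (hS hu)⟩
  · rintro S S' ⟨κ, hκ, H⟩ ⟨κ', hκ', H'⟩
    refine ⟨min κ κ', lt_min hκ hκ', ?_⟩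
    filter_upwards [H, H'] with n hn hn' u hu
    rcases hu with hu | hu
    · exact le_trans (by gcongr; exact min_le_left _ _) (hn u hu)
    · exact le_trans (by gcongr; exact min_le_right _ _) (hn' u hu)
  · intro t₀ _
    obtain ⟨κ, hκ, a, b, hμab, hsine⟩ := hμ.exists_Ioo_rat_sin_sq_ge t₀
    obtain ⟨ρ, hρ, hwρ⟩ := hw_pos (max |(a : ℝ)| |(b : ℝ)|)
    obtain ⟨δ, hδ, hsum⟩ := (hfreq a b).exists_le_sum_mul measurableSet_Ioo hμab hw hρ
      fun n i hi => hwρ n i (abs_le_max_abs_abs hi.1.le hi.2.le)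
    refine ⟨_, mem_nhdsWithin_of_mem_nhds hsine, δ * κ, by positivity, ?_⟩
    filter_upwards [hsum] with n hn u hu
    exact le_of_eq_of_le (by ring)
      (hn (κ * u ^ 2) (by positivity) (fun x => sin (u * x) ^ 2) (fun x => sq_nonneg _) hu)

end EmpiricalMeans

section ClippedInverse

/-- The largest `l ∈ [0, B]` with `φ l ≤ C`, an inverse of the increasing function `φ` that is
defined for all `C`; it is `0` when there is no such `l`. -/
def clippedInverse (B : ℝ) (φ : ℝ → ℝ) (C : ℝ) : ℝ := sSup {l ∈ Icc 0 B | φ l ≤ C}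

lemma clippedInverse_mem_Icc {B : ℝ} (hB : 0 ≤ B) (φ : ℝ → ℝ) (C : ℝ) :
    clippedInverse B φ C ∈ Icc 0 B :=
  ⟨Real.sSup_nonneg fun _ hl => hl.1.1, Real.sSup_le (fun _ hl => hl.1.2) hB⟩

lemma le_clippedInverse_iff {B C a : ℝ} {φ : ℝ → ℝ} (hmono : MonotoneOn φ (Icc 0 B))
    (hcont : ContinuousOn φ (Icc 0 B)) (ha : a ∈ Ioc 0 B) :
    a ≤ clippedInverse B φ C ↔ φ a ≤ C := by
  have hbdd : BddAbove {l ∈ Icc 0 B | φ l ≤ C} := ⟨B, fun _ hl => hl.1.2⟩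
  refine ⟨fun hle => ?_, fun hle => le_csSup hbdd ⟨Ioc_subset_Icc_self ha, hle⟩⟩
  have hne : {l ∈ Icc 0 B | φ l ≤ C}.Nonempty := by
    by_contra hempty
    rw [clippedInverse, not_nonempty_iff_eq_empty.1 hempty, Real.sSup_empty] at hle
    exact ha.1.not_ge hle
  have hmem := (hcont.preimage_isClosed_of_isClosed isClosed_Icc isClosed_Iic).csSup_mem hne hbdd
  exact (hmono (Ioc_subset_Icc_self ha) hmem.1 hle).trans hmem.2

lemma map_clippedInverse {B C a b : ℝ} {φ : ℝ → ℝ} (hmono : MonotoneOn φ (Icc 0 B))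
    (hcont : ContinuousOn φ (Icc 0 B)) (ha : a ∈ Ioc 0 B) (hb : b ∈ Ioc 0 B) (haC : φ a < C)
    (hbC : C < φ b) : φ (clippedInverse B φ C) = C := by
  have hle {l : ℝ} := le_clippedInverse_iff (C := C) (a := l) hmono hcont
  have hmem := clippedInverse_mem_Icc (ha.1.le.trans ha.2) φ C
  have hpos : 0 < clippedInverse B φ C := ha.1.trans_le ((hle ha).2 haC.le)
  have hab : a ≤ b := (hmono.reflect_lt (Ioc_subset_Icc_self ha) (Ioc_subset_Icc_self hb)
    (haC.trans hbC)).le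
  refine le_antisymm ((hle ⟨hpos, hmem.2⟩).1 le_rfl) ?_
  obtain ⟨x, hx, rfl⟩ := intermediate_value_Icc hab (hcont.mono (Icc_subset_Icc ha.1.le hb.2))
    ⟨haC.le, hbC.le⟩
  have hxmem : x ∈ Ioc 0 B := ⟨ha.1.trans_le hx.1, hx.2.trans hb.2⟩
  exact hmono (Ioc_subset_Icc_self hxmem) hmem ((hle hxmem).2 le_rfl)

lemma measurable_clippedInverse {α : Type*} [MeasurableSpace α] {B : ℝ} (hB : 0 ≤ B)
    {φ : α → ℝ → ℝ} (hmono : ∀ x, MonotoneOn (φ x) (Icc 0 B))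
    (hcont : ∀ x, ContinuousOn (φ x) (Icc 0 B)) (hφ : ∀ l, Measurable fun x => φ x l)
    {C : α → ℝ} (hC : Measurable C) : Measurable fun x => clippedInverse B (φ x) (C x) := by
  have hmem (x : α) := clippedInverse_mem_Icc hB (φ x) (C x)
  refine measurable_of_Ici fun a => ?_
  rcases le_or_gt a 0 with ha | ha
  · convert MeasurableSet.univ
    exact eq_univ_of_forall fun x => ha.trans (hmem x).1
  rcases le_or_gt a B with haB | haB
  · have hpre : (fun x => clippedInverse B (φ x) (C x)) ⁻¹' Ici a = {x | φ x a ≤ C x} :=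
      Set.ext fun x => le_clippedInverse_iff (hmono x) (hcont x) ⟨ha, haB⟩
    rw [hpre]
    exact measurableSet_le (hφ a) hC
  · convert MeasurableSet.empty
    exact eq_empty_of_forall_notMem fun x hx => ((hmem x).2.trans_lt haB).not_ge hx

lemma tendsto_clippedInverse {B l : ℝ} {φ : ℕ → ℝ → ℝ} {C : ℕ → ℝ} (hl : 0 < l) (hlB : l < B)
    (hmono : ∀ n, MonotoneOn (φ n) (Icc 0 B)) (hcont : ∀ n, ContinuousOn (φ n) (Icc 0 B))
    (hlt : ∀ q : ℚ, 0 < (q : ℝ) → q < l → ∀ᶠ n in atTop, φ n q < C n)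
    (hgt : ∀ q : ℚ, l < q → ∀ᶠ n in atTop, C n < φ n q) :
    Tendsto (fun n => clippedInverse B (φ n) (C n)) atTop (𝓝 l) := by
  refine tendsto_order.2 ⟨fun a ha => ?_, fun b hb => ?_⟩
  · obtain ⟨q, hq, hql⟩ := exists_rat_btwn (max_lt ha hl)
    obtain ⟨haq, hq0⟩ := max_lt_iff.1 hq
    filter_upwards [hlt q hq0 hql] with n hn
    exact haq.trans_le
      ((le_clippedInverse_iff (hmono n) (hcont n) ⟨hq0, (hql.trans hlB).le⟩).2 hn.le)
  · obtain ⟨q, hlq, hq⟩ := exists_rat_btwn (lt_min hb hlB)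
    obtain ⟨hqb, hqB⟩ := lt_min_iff.1 hq
    filter_upwards [hgt q hlq] with n hn
    refine lt_of_not_ge fun hle => hn.not_ge ?_
    exact (le_clippedInverse_iff (hmono n) (hcont n) ⟨hl.trans hlq, hqB.le⟩).1 (hqb.le.trans hle)

lemma eventually_map_clippedInverse {B l : ℝ} {φ : ℕ → ℝ → ℝ} {C : ℕ → ℝ} (hl : 0 < l) (hlB : l < B)
    (hmono : ∀ n, MonotoneOn (φ n) (Icc 0 B)) (hcont : ∀ n, ContinuousOn (φ n) (Icc 0 B))
    (hlt : ∀ q : ℚ, 0 < (q : ℝ) → q < l → ∀ᶠ n in atTop, φ n q < C n)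
    (hgt : ∀ q : ℚ, l < q → ∀ᶠ n in atTop, C n < φ n q) :
    ∀ᶠ n in atTop, φ n (clippedInverse B (φ n) (C n)) = C n := by
  obtain ⟨p, hp, hpl⟩ := exists_rat_btwn hl
  obtain ⟨q, hlq, hqB⟩ := exists_rat_btwn hlB
  filter_upwards [hlt p hp hpl, hgt q hlq] with n hpn hqn
  exact map_clippedInverse (hmono n) (hcont n) ⟨hp, (hpl.trans hlB).le⟩ ⟨hl.trans hlq, hqB.le⟩
    hpn hqn

end ClippedInverse

section RateFunction

lemma iSup_mul_sub_eq_of_hasDerivAt {f : ℝ → ℝ} (hf : ConvexOn ℝ univ f) {a l : ℝ}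
    (hfl : HasDerivAt f a l) : ⨆ y, (y * a - f y) = l * a - f l := by
  have hconv : ConvexOn ℝ univ fun y => f y - y * a :=
    hf.sub ((LinearMap.mulRight ℝ a).concaveOn convex_univ)
  have hderiv : HasDerivAt (fun y => f y - y * a) 0 l :=
    (hfl.sub ((hasDerivAt_id l).mul_const a)).congr_deriv (by ring)
  have hmin : IsMinOn (fun y => f y - y * a) univ l :=
    hconv.isMinOn_of_rightDeriv_eq_zero (by simp)
      (hderiv.hasDerivWithinAt.derivWithin (uniqueDiffWithinAt_Ioi l))
  refine IsGreatest.csSup_eq ⟨⟨l, rfl⟩, ?_⟩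
  rintro _ ⟨y, rfl⟩
  have : f l - l * a ≤ f y - y * a := hmin (mem_univ y)
  simp only
  linarith

variable {m : ℝ} {μ : Measure ℝ}

lemma integrable_comp_mul_of_abs_le {f : ℝ → ℝ} (hf : Continuous f) {K : ℝ}
    (hfK : ∀ x, |f x| ≤ K * |x|) (hμ : Integrable (fun x => x) μ) (l : ℝ) :
    Integrable (fun x => f (l * x)) μ := by
  refine (hμ.abs.const_mul (K * |l|)).mono' (by fun_prop) (ae_of_all _ fun x => ?_)
  rw [norm_eq_abs, mul_assoc, ← abs_mul]
  exact hfK (l * x)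

lemma integrable_gfun_mul (hm : m ∈ Ioo (-1) 1) (hμ : Integrable (fun x => x) μ) (l : ℝ) :
    Integrable (fun x => gfun m (l * x)) μ :=
  integrable_comp_mul_of_abs_le (continuous_gfun hm) (abs_gfun_le hm) hμ l

lemma integrable_tiltEntropy_mul (hm : m ∈ Ioo (-1) 1) (hμ : Integrable (fun x => x) μ) (l : ℝ) :
    Integrable (fun x => tiltEntropy m (l * x)) μ :=
  integrable_comp_mul_of_abs_le (continuous_tiltEntropy hm) (abs_tiltEntropy_le hm) hμ l

lemma integrable_mul_tiltMean_sub (hm : m ∈ Ioo (-1) 1) (hμ : Integrable (fun x => x) μ) (l : ℝ) :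
    Integrable (fun x => x * (tiltMean m (l * x) - m)) μ := by
  have := continuous_tiltMean hm
  exact hμ.mul_bdd (c := 2) (by fun_prop) (ae_of_all _ fun x => abs_tiltMean_sub_le hm (l * x))

lemma hasDerivAt_Gf (hm : m ∈ Ioo (-1) 1) (hμ : Integrable (fun x => x) μ) (l : ℝ) :
    HasDerivAt (Gf μ m) (∫ x, x * (tiltMean m (l * x) - m) ∂μ) l := by
  refine (hasDerivAt_integral_of_dominated_loc_of_deriv_le (s := univ)
    (F := fun l x => gfun m (l * x)) (F' := fun l x => x * (tiltMean m (l * x) - m))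
    (bound := fun x => |x| * 2) univ_mem
    (Eventually.of_forall fun y => (integrable_gfun_mul hm hμ y).aestronglyMeasurable)
    (integrable_gfun_mul hm hμ l) (integrable_mul_tiltMean_sub hm hμ l).aestronglyMeasurable
    (ae_of_all _ fun x y _ => ?_) (hμ.abs.mul_const 2) (ae_of_all _ fun x y _ => ?_)).2
  · rw [norm_mul, norm_eq_abs, norm_eq_abs]
    gcongr
    exact abs_tiltMean_sub_le hm _
  · exact ((hasDerivAt_gfun hm (y * x)).comp y (hasDerivAt_mul_const x)).congr_deriv (mul_comm _ _)

lemma convexOn_Gf (hm : m ∈ Ioo (-1) 1) (hμ : Integrable (fun x => x) μ) :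
    ConvexOn ℝ univ (Gf μ m) := by
  refine Monotone.convexOn_univ_of_deriv (fun l => (hasDerivAt_Gf hm hμ l).differentiableAt) ?_
  rw [funext fun l => (hasDerivAt_Gf hm hμ l).deriv]
  refine fun a b hab => integral_mono (integrable_mul_tiltMean_sub hm hμ a)
    (integrable_mul_tiltMean_sub hm hμ b) fun x => ?_
  have hmono := (strictMono_tiltMean hm).monotone
  rcases le_total 0 x with hx | hx
  · exact mul_le_mul_of_nonneg_left (sub_le_sub_right (hmono (by gcongr)) m) hx
  · exact mul_le_mul_of_nonpos_left
      (sub_le_sub_right (hmono (mul_le_mul_of_nonpos_right hab hx)) m) hx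

lemma Gstar_deriv_Gf (hm : m ∈ Ioo (-1) 1) (hμ : Integrable (fun x => x) μ) (l : ℝ) :
    Gstar μ m (deriv (Gf μ m) l) = ∫ x, tiltEntropy m (l * x) ∂μ := by
  have hderiv := hasDerivAt_Gf hm hμ l
  rw [hderiv.deriv, Gstar, iSup_mul_sub_eq_of_hasDerivAt (convexOn_Gf hm hμ) hderiv, Gf,
    ← integral_const_mul, ← integral_sub ((integrable_mul_tiltMean_sub hm hμ l).const_mul l)
      (integrable_gfun_mul hm hμ l)]
  simp only [tiltEntropy, mul_assoc]

lemma strictMonoOn_integral_tiltEntropy (hm : m ∈ Ioo (-1) 1) (hμ : Integrable (fun x => x) μ)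
    (hμ0 : ∃ᵐ x ∂μ, x ≠ 0) :
    StrictMonoOn (fun l => ∫ x, tiltEntropy m (l * x) ∂μ) (Ici 0) := by
  intro a ha b hb hab
  have hle : (fun x => tiltEntropy m (a * x)) ≤ᵐ[μ] fun x => tiltEntropy m (b * x) :=
    ae_of_all _ fun x => monotoneOn_tiltEntropy_mul hm x ha hb hab.le
  have hinta := integrable_tiltEntropy_mul hm hμ a
  have hintb := integrable_tiltEntropy_mul hm hμ b
  refine (integral_mono_ae hinta hintb hle).lt_of_ne fun heq => ?_
  obtain ⟨x, hx, hxeq⟩ :=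
    (hμ0.and_eventually ((integral_eq_iff_of_ae_le hinta hintb hle).1 heq)).exists
  exact (strictMonoOn_tiltEntropy_mul hm hx ha hb hab).ne hxeq

end RateFunction

section TypicalSequence

/-- A sequence `h` whose empirical measures converge to `μ` when tested against the countably many
functions that the proof uses; almost every i.i.d. sequence of law `μ` is of this kind. -/
structure Typical (μ : Measure ℝ) (m : ℝ) (h : ℕ → ℝ) : Prop where
  cube : HasEmpiricalMean μ h fun x => |x| ^ 3
  interval : ∀ a b : ℚ, HasEmpiricalMean μ h ((Ioo (a : ℝ) b).indicator 1)
  entropy : ∀ q : ℚ, HasEmpiricalMean μ h fun x => tiltEntropy m (q * x)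

variable {m : ℝ} {μ : Measure ℝ}

lemma integrable_id_of_integrable_abs_cube [IsFiniteMeasure μ]
    (hμ : Integrable (fun x => |x| ^ 3) μ) : Integrable (fun x => x) μ := by
  refine ((integrable_const 1).add hμ).mono' (by fun_prop) (ae_of_all _ fun x => ?_)
  rw [norm_eq_abs]
  rcases le_total |x| 1 with hx | hx
  · exact hx.trans (le_add_of_nonneg_right (by positivity))
  · exact (le_self_pow₀ hx three_ne_zero).trans (le_add_of_nonneg_left zero_le_one)

lemma ae_typical {Ω : Type*} [MeasurableSpace Ω] {P : Measure Ω} {X : ℕ → Ω → ℝ}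
    (hmeas : ∀ i, Measurable (X i)) (hindep : iIndepFun X P)
    (hlaw : ∀ i, P.map (X i) = μ) (hm : m ∈ Ioo (-1) 1) (hμ : Integrable (fun x => |x| ^ 3) μ) :
    ∀ᵐ ω ∂P, Typical μ m fun i => X i ω := by
  have := hindep.isProbabilityMeasure
  have : IsFiniteMeasure μ := hlaw 0 ▸ inferInstance
  have hmean {f : ℝ → ℝ} := ae_hasEmpiricalMean (f := f) hmeas hindep hlaw
  have hinterval : ∀ᵐ ω ∂P, ∀ a b : ℚ,
      HasEmpiricalMean μ (fun i => X i ω) ((Ioo (a : ℝ) b).indicator 1) :=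
    ae_all_iff.2 fun _ => ae_all_iff.2 fun _ =>
      hmean (measurable_one.indicator measurableSet_Ioo)
        ((integrable_const 1).indicator measurableSet_Ioo)
  have hentropy : ∀ᵐ ω ∂P, ∀ q : ℚ,
      HasEmpiricalMean μ (fun i => X i ω) fun x => tiltEntropy m (q * x) :=
    ae_all_iff.2 fun q => hmean
      ((continuous_tiltEntropy hm).measurable.comp (measurable_const_mul (q : ℝ)))
      (integrable_tiltEntropy_mul hm (integrable_id_of_integrable_abs_cube hμ) q)
  filter_upwards [hmean (by fun_prop) hμ, hinterval, hentropy] with ω h₁ h₂ h₃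
  exact ⟨h₁, h₂, h₃⟩

lemma exists_le_one_sub_tiltMean_sq (hm : m ∈ Ioo (-1) 1) (R : ℝ) :
    ∃ ρ > 0, ∀ y, |y| ≤ R → ρ ≤ 1 - tiltMean m y ^ 2 := by
  have hcont : Continuous fun y => 1 - tiltMean m y ^ 2 :=
    continuous_const.sub ((continuous_tiltMean hm).pow 2)
  simp only [abs_le, ← mem_Icc]
  exact isCompact_Icc.exists_forall_le' hcont.continuousOn fun y _ => one_sub_tiltMean_sq_pos hm y

variable {h : ℕ → ℝ}

lemma Typical.localLimitCondition [IsFiniteMeasure μ] (H : Typical μ m h) (hm : m ∈ Ioo (-1) 1)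
    (hμ : NonLattice μ) {Λ : ℕ → ℝ} {B : ℝ} (hΛ : ∀ n, |Λ n| ≤ B) :
    LocalLimitCondition (fun n i => tiltMean m (Λ n * h i)) h where
  mean_mem n i := Ioo_subset_Icc_self (tiltMean_mem_Ioo hm _)
  cube_le := ⟨_, H.cube.eventually_le (lt_add_one _)⟩
  sine_ge := by
    refine hμ.exists_le_sum_mul_sin_sq H.interval
      (fun n i => (one_sub_tiltMean_sq_pos hm (Λ n * h i)).le) fun R => ?_
    obtain ⟨ρ, hρ, hle⟩ := exists_le_one_sub_tiltMean_sq hm (B * R)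
    refine ⟨ρ, hρ, fun n i hi => hle _ ?_⟩
    rw [abs_mul]
    exact mul_le_mul (hΛ n) hi (abs_nonneg _) ((abs_nonneg _).trans (hΛ n))

end TypicalSequence

section EmpiricalTilt

variable {m : ℝ}

/-- The rate function of `Hn` given `h`, parametrized by the tilt `l`. -/
def empiricalEntropy (m : ℝ) (h : ℕ → ℝ) (n : ℕ) (l : ℝ) : ℝ :=
  ∑ i ∈ Finset.range n, tiltEntropy m (l * h i)

lemma monotoneOn_empiricalEntropy (hm : m ∈ Ioo (-1) 1) (h : ℕ → ℝ) (n : ℕ) :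
    MonotoneOn (empiricalEntropy m h n) (Ici 0) := fun _ ha _ hb hab =>
  Finset.sum_le_sum fun i _ => monotoneOn_tiltEntropy_mul hm (h i) ha hb hab

lemma continuous_empiricalEntropy (hm : m ∈ Ioo (-1) 1) (h : ℕ → ℝ) (n : ℕ) :
    Continuous (empiricalEntropy m h n) :=
  continuous_finsetSum _ fun i _ => (continuous_tiltEntropy hm).comp (continuous_mul_const (h i))

lemma measurable_empiricalEntropy (hm : m ∈ Ioo (-1) 1) (n : ℕ) (l : ℝ) :
    Measurable fun h : ℕ → ℝ => empiricalEntropy m h n l :=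
  Finset.measurable_sum _ fun i _ =>
    (continuous_tiltEntropy hm).measurable.comp (measurable_const.mul (measurable_pi_apply i))

/-- The tilt in `[0, B]` at which the empirical entropy takes the value `C`. -/
def empiricalTilt (m B : ℝ) (h : ℕ → ℝ) (n : ℕ) (C : ℝ) : ℝ :=
  clippedInverse B (empiricalEntropy m h n) C

lemma abs_empiricalTilt_le {B : ℝ} (hB : 0 ≤ B) (h : ℕ → ℝ) (n : ℕ) (C : ℝ) :
    |empiricalTilt m B h n C| ≤ B := by
  have hmem := clippedInverse_mem_Icc hB (empiricalEntropy m h n) C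
  rw [empiricalTilt, abs_of_nonneg hmem.1]
  exact hmem.2

lemma measurable_empiricalTilt (hm : m ∈ Ioo (-1) 1) {B : ℝ} (hB : 0 ≤ B) {n : ℕ}
    {C : (ℕ → ℝ) → ℝ} (hC : Measurable C) :
    Measurable fun h => empiricalTilt m B h n (C h) :=
  measurable_clippedInverse hB
    (fun h => (monotoneOn_empiricalEntropy hm h n).mono Icc_subset_Ici_self)
    (fun h => (continuous_empiricalEntropy hm h n).continuousOn)
    (measurable_empiricalEntropy hm n) hC

lemma measurable_centering (hm : m ∈ Ioo (-1) 1) {n : ℕ} {L C : (ℕ → ℝ) → ℝ}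
    (hL : Measurable L) (hC : Measurable C) :
    Measurable fun h => centering m h n (L h) (C h) := by
  have hgfun := (continuous_gfun hm).measurable
  have hmean := (continuous_tiltMean hm).measurable
  unfold centering spinVariance
  fun_prop

lemma eventually_lt_of_tendsto_div_natCast {S S' : ℕ → ℝ} {a a' : ℝ}
    (hS : Tendsto (fun n => S n / n) atTop (𝓝 a)) (hS' : Tendsto (fun n => S' n / n) atTop (𝓝 a'))
    (haa' : a < a') : ∀ᶠ n in atTop, S n < S' n := by
  filter_upwards [hS.eventually_lt hS' haa', eventually_gt_atTop 0] with n hlt hn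
  exact (div_lt_div_iff_of_pos_right (Nat.cast_pos.2 hn)).1 hlt

theorem Typical.tendsto_empiricalTilt {μ : Measure ℝ} {h : ℕ → ℝ} (H : Typical μ m h)
    (hm : m ∈ Ioo (-1) 1) (hμ : Integrable (fun x => x) μ) (hμ0 : ∃ᵐ x ∂μ, x ≠ 0)
    {l B : ℝ} (hl : 0 < l) (hlB : l < B) {C : ℕ → ℝ}
    (hC : Tendsto (fun n => C n / n) atTop (𝓝 (∫ x, tiltEntropy m (l * x) ∂μ))) :
    Tendsto (fun n => empiricalTilt m B h n (C n)) atTop (𝓝 l) ∧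
      ∀ᶠ n in atTop, empiricalEntropy m h n (empiricalTilt m B h n (C n)) = C n := by
  have hstrict := strictMonoOn_integral_tiltEntropy hm hμ hμ0
  have hmono (n : ℕ) := (monotoneOn_empiricalEntropy hm h n).mono (Icc_subset_Ici_self (a := B))
  have hcont (n : ℕ) := (continuous_empiricalEntropy hm h n).continuousOn (s := Icc 0 B)
  have hlt : ∀ q : ℚ, 0 < (q : ℝ) → q < l → ∀ᶠ n in atTop, empiricalEntropy m h n q < C n :=
    fun q hq hql => eventually_lt_of_tendsto_div_natCast (H.entropy q) hC (hstrict hq.le hl.le hql)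
  have hgt : ∀ q : ℚ, l < q → ∀ᶠ n in atTop, C n < empiricalEntropy m h n q :=
    fun q hlq => eventually_lt_of_tendsto_div_natCast hC (H.entropy q)
      (hstrict hl.le (hl.trans hlq).le hlq)
  exact ⟨tendsto_clippedInverse hl hlB hmono hcont hlt hgt,
    eventually_map_clippedInverse hl hlB hmono hcont hlt hgt⟩

end EmpiricalTilt

theorem stmt1_general {Ω : Type*} [MeasurableSpace Ω] {P : Measure Ω}
    {X : ℕ → Ω → ℝ} (hXmeas : ∀ i, Measurable (X i)) (hXindep : iIndepFun X P)
    {μ : Measure ℝ} (hXdist : ∀ i, P.map (X i) = μ) (hμ : NonLattice μ)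
    (hcube : Integrable (fun x => |x| ^ 3) μ) {m : ℝ} (hm : m ∈ Ioo (-1) 1)
    {l : ℝ} (hl : 0 < l) {C : ℕ → (ℕ → ℝ) → ℝ} (hCmeas : ∀ n, Measurable (C n))
    (hC : ∀ᵐ ω ∂P, Tendsto (fun n => C n (fun i => X i ω) / n) atTop
      (𝓝 (Gstar μ m (deriv (Gf μ m) l)))) :
    ∃ A : ℕ → (ℕ → ℝ) → ℝ, (∀ n, Measurable (A n)) ∧
      ∀ᵐ ω ∂P, ∀ f : ℝ → ℝ, Continuous f → HasCompactSupport f →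
        Tendsto (fun n => exp (C n fun i => X i ω) * ∑ τ : Fin n → Bool,
            Pcyl m n τ * f (Hn m n (fun i => X i ω) τ - A n fun i => X i ω))
          atTop (𝓝 (∫ x, f x * exp (-(l * x)))) := by
  have := hXindep.isProbabilityMeasure
  have : IsFiniteMeasure μ := hXdist 0 ▸ inferInstance
  have hint := integrable_id_of_integrable_abs_cube hcube
  have hB : 0 ≤ 2 * l := by positivity
  simp only [Gstar_deriv_Gf hm hint] at hC
  refine ⟨fun n h => centering m h n (empiricalTilt m (2 * l) h n (C n h)) (C n h),
    fun n => measurable_centering hm (measurable_empiricalTilt hm hB (hCmeas n)) (hCmeas n), ?_⟩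
  filter_upwards [ae_typical hXmeas hXindep hXdist hm hcube, hC] with ω H hCω f hf hfc
  obtain ⟨hΛ, hroot⟩ :=
    H.tendsto_empiricalTilt hm hint hμ.frequently_ne_zero hl (lt_two_mul_self hl) hCω
  exact tendsto_exp_mul_sum_centering hm hl hΛ hroot
    (H.localLimitCondition hm hμ fun n => abs_empiricalTilt_le hB _ n _) hf hfc

/-- Theorem on universal asymptotics of the conditional kernels:
there exists an `h`-measurable centering `A_n(h)` such that, almost surely, the kernels
`K_n(h,·) = e^{C_n(h)} P_σ(H_n(h,σ) − A_n(h) ∈ ·)` converge vaguely to `e^{−λ̃x}dx`;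
vague convergence is expressed through integrals of continuous compactly supported
functions, and `∫ f dK_n = e^{C_n(h)} Σ_τ P_σ([τ]) f(H_n(h,τ) − A_n(h))`. -/
theorem stmt1 {Ω : Type*} [MeasurableSpace Ω] (P : Measure Ω) [IsProbabilityMeasure P]
    (X : ℕ → Ω → ℝ) (hXmeas : ∀ i, Measurable (X i))
    (hXindep : iIndepFun X P)
    (μ : Measure ℝ) (hXdist : ∀ i, Measure.map (X i) P = μ)
    (hAss : Assumption1 μ) (m : ℝ) (hm : m ∈ Set.Ioo (-1 : ℝ) 1)
    (c : ℝ) (hc : c ∈ Set.Ioo 0 (gammaBar μ m))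
    (atil ltil : ℝ) (hatil : atil ∈ Set.Ioo 0 (sigmaBar μ m)) (hltil : 0 < ltil)
    (hGstar : Gstar μ m atil = c) (hGderiv : deriv (Gf μ m) ltil = atil)
    (C : ℕ → (ℕ → ℝ) → ℝ) (hCmeas : ∀ n, Measurable (C n))
    (hCmem : ∀ᵐ ω ∂P, ∀ᶠ n in atTop,
      C n (fun i => X i ω) ∈ Set.Ioo 0 (GammaN m n (fun i => X i ω)))
    (hCconv : ∀ᵐ ω ∂P,
      Tendsto (fun n => C n (fun i => X i ω) / n) atTop (nhds c)) :
    ∃ A : ℕ → (ℕ → ℝ) → ℝ, (∀ n, Measurable (A n)) ∧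
      ∀ᵐ ω ∂P, ∀ f : ℝ → ℝ, Continuous f → HasCompactSupport f →
        Tendsto (fun n =>
            Real.exp (C n (fun i => X i ω)) *
              ∑ τ : Fin n → Bool, Pcyl m n τ *
                f (Hn m n (fun i => X i ω) τ - A n (fun i => X i ω)))
          atTop
          (nhds (∫ x : ℝ, f x * Real.exp (-(ltil * x)))) := by
  subst hGstar hGderiv
  exact stmt1_general hXmeas hXindep hXdist (nonLattice_of_not_mutuallySingular hAss.acPart)
    hAss.intCube hm hltil hCmeas hCconv
end
end

section
/- Fix m ∈ (−1,1), n ∈ ℕ, h ∈ ℝ^n with h ≠ 0, x ∈ ℝ, and C ∈ ℝ. Suppose (Ã, Λ̃, Λ̃ˣ) satisfies the system M*_n(h,Ã) + (1/2)log(2π M''_n(h,Λ̃)) = C, M'_n(h,Λ̃) = Ã, M'_n(h,Λ̃ˣ) = Ã + x, with Ã ∈ (0, Σ_n(h)) and Ã + x ∈ (0, Σ_n(h)). Define J_n(h,a) = e^{−M*_n(h,a)} / ( Λ_n(h,a) · √(2π M''_n(h, Λ_n(h,a))) ). Then √( M''_n(h,Λ̃ˣ)/M''_n(h,Λ̃)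 ) · Λ̃ˣ · J_n(h, Ã + x) ≤ e^{−C − Λ̃ x}, and √( M''_n(h,Λ̃ˣ)/M''_n(h,Λ̃) ) · Λ̃ˣ · J_n(h, Ã + x) ≥ e^{−C − Λ̃ˣ x}. -/
open MeasureTheory Real Filter Set
open scoped Topology BigOperators

noncomputable section

/-- `M_n(h,λ) = Σ_{i=1}^n g(λ h_i)` for `h ∈ ℝ^n`. -/
def Mn {n : ℕ} (m : ℝ) (h : Fin n → ℝ) (lam : ℝ) : ℝ :=
  ∑ i : Fin n, gfun m (lam * h i)

/-- `M*_n(h,a) = sup_{λ∈ℝ}(λa − M_n(h,λ))`. -/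
def MstarN {n : ℕ} (m : ℝ) (h : Fin n → ℝ) (a : ℝ) : ℝ :=
  ⨆ lam : ℝ, (lam * a - Mn m h lam)

/-- `Σ_n(h) = −m Σ_{i=1}^n h_i + Σ_{i=1}^n |h_i|`. -/
def SigmaN {n : ℕ} (m : ℝ) (h : Fin n → ℝ) : ℝ :=
  -m * ∑ i : Fin n, h i + ∑ i : Fin n, |h i|

/-- `J_n(h,a) = e^{−M*_n(h,a)} / (Λ_n(h,a) √(2π M''_n(h,Λ_n(h,a))))`. -/
def Jn {n : ℕ} (m : ℝ) (h : Fin n → ℝ) (Lam : ℝ → ℝ) (a : ℝ) : ℝ :=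
  Real.exp (-(MstarN m h a)) /
    (Lam a * Real.sqrt (2 * π * deriv (deriv (Mn m h)) (Lam a)))

/-!
Write `s = Λ̃` and `t = Λ̃ˣ`. The factors `t` and `√M''(t)` cancel against the denominator of
`J_n`, so the quantity to be bounded equals `exp (-C + M*(M'(s)) - M*(M'(t)))`. Since `M` is
convex, the supremum defining `M*(M'(s))` is attained at `s`; evaluating the supremum defining
`M*(M'(t))` at `s` then says that `s` is a subgradient of `M*` at `M'(s)`. The subgradient
inequalities at `s` and at `t` are the two bounds.
-/

section LegendreTransform

/-- The Legendre transform `a ↦ sup_t (t a - f t)` of a real function. The supremum is taken in `ℝ`,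
so it has the junk value `0` where `t ↦ t a - f t` is unbounded above. -/
def legendreTransform (f : ℝ → ℝ) (a : ℝ) : ℝ :=
  ⨆ t : ℝ, (t * a - f t)

theorem deriv_mul_sub_le_sub_of_convexOn {S : Set ℝ} {f : ℝ → ℝ} {t s : ℝ} (hf : ConvexOn ℝ S f)
    (ht : t ∈ S) (hs : s ∈ S) (hft : DifferentiableAt ℝ f t) :
    deriv f t * (s - t) ≤ f s - f t := by
  rcases lt_trichotomy s t with hst | rfl | hts
  · have hslope := hf.slope_le_deriv hs ht hst hft
    rw [slope_def_field, div_le_iff₀ (sub_pos.mpr hst)] at hslope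
    linarith
  · simp
  · have hslope := hf.deriv_le_slope ht hs hts hft
    rwa [slope_def_field, le_div_iff₀ (sub_pos.mpr hts)] at hslope

variable {f : ℝ → ℝ} {s t : ℝ}

theorem isGreatest_range_mul_deriv_sub (hf : ConvexOn ℝ univ f) (ht : DifferentiableAt ℝ f t) :
    IsGreatest (range fun r ↦ r * deriv f t - f r) (t * deriv f t - f t) := by
  refine ⟨mem_range_self t, ?_⟩
  rintro _ ⟨r, rfl⟩
  linarith [deriv_mul_sub_le_sub_of_convexOn hf (mem_univ t) (mem_univ r) ht]

theorem legendreTransform_deriv (hf : ConvexOn ℝ univ f) (ht : DifferentiableAt ℝ f t) :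
    legendreTransform f (deriv f t) = t * deriv f t - f t :=
  (isGreatest_range_mul_deriv_sub hf ht).csSup_eq

theorem mul_deriv_sub_le_legendreTransform_sub (hf : ConvexOn ℝ univ f)
    (hs : DifferentiableAt ℝ f s) (ht : DifferentiableAt ℝ f t) :
    s * (deriv f t - deriv f s) ≤
      legendreTransform f (deriv f t) - legendreTransform f (deriv f s) := by
  have hle : s * deriv f t - f s ≤ legendreTransform f (deriv f t) :=
    le_ciSup (isGreatest_range_mul_deriv_sub hf ht).bddAbove s
  linarith [legendreTransform_deriv hf hs]

end LegendreTransform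

section TwoPoint

/-- The moment generating function `p e^{ta} + q e^{tb}` of masses `p`, `q` placed at `a`, `b`. The
masses may have any sign, so that the derivative in `t` is again of this form. -/
def twoPointMGF (p q a b t : ℝ) : ℝ :=
  p * exp (t * a) + q * exp (t * b)

theorem hasDerivAt_twoPointMGF (p q a b t : ℝ) :
    HasDerivAt (twoPointMGF p q a b) (twoPointMGF (p * a) (q * b) a b t) t := by
  have h := ((hasDerivAt_mul_const a (x := t)).exp.const_mul p).add
    ((hasDerivAt_mul_const b (x := t)).exp.const_mul q)
  exact h.congr_deriv (by rw [twoPointMGF]; ring)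

variable {p q : ℝ}

theorem twoPointMGF_pos (hp : 0 < p) (hq : 0 < q) (a b t : ℝ) : 0 < twoPointMGF p q a b t := by
  unfold twoPointMGF
  positivity

theorem hasDerivAt_log_twoPointMGF (hp : 0 < p) (hq : 0 < q) (a b t : ℝ) :
    HasDerivAt (fun s ↦ log (twoPointMGF p q a b s))
      (twoPointMGF (p * a) (q * b) a b t / twoPointMGF p q a b t) t :=
  (hasDerivAt_twoPointMGF p q a b t).log (twoPointMGF_pos hp hq a b t).ne'

theorem twoPointMGF_mul_sub_sq (p q a b t : ℝ) :
    twoPointMGF (p * a * a) (q * b * b) a b t * twoPointMGF p q a b t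
      - twoPointMGF (p * a) (q * b) a b t * twoPointMGF (p * a) (q * b) a b t
      = p * q * (a - b) ^ 2 * (exp (t * a) * exp (t * b)) := by
  unfold twoPointMGF
  ring

theorem hasDerivAt_twoPointMGF_div (hp : 0 < p) (hq : 0 < q) (a b t : ℝ) :
    HasDerivAt (fun s ↦ twoPointMGF (p * a) (q * b) a b s / twoPointMGF p q a b s)
      (p * q * (a - b) ^ 2 * (exp (t * a) * exp (t * b)) / twoPointMGF p q a b t ^ 2) t := by
  rw [← twoPointMGF_mul_sub_sq]
  exact (hasDerivAt_twoPointMGF (p * a) (q * b) a b t).div (hasDerivAt_twoPointMGF p q a b t)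
    (twoPointMGF_pos hp hq a b t).ne'

end TwoPoint

theorem hasDerivAt_sum_mul_comp_mul {ι : Type*} (u : Finset ι) (w h : ι → ℝ) {g : ℝ → ℝ}
    {t : ℝ} (hg : ∀ i ∈ u, DifferentiableAt ℝ g (t * h i)) :
    HasDerivAt (fun s ↦ ∑ i ∈ u, w i * g (s * h i))
      (∑ i ∈ u, w i * h i * deriv g (t * h i)) t := by
  refine HasDerivAt.fun_sum fun i hi ↦ ?_
  have hcomp := (hg i hi).hasDerivAt.comp t (hasDerivAt_mul_const (h i))
  exact (hcomp.const_mul (w i)).congr_deriv (by ring)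

section CumulantGeneratingFunction

variable {m : ℝ}

theorem gfun_eq_log_twoPointMGF (m : ℝ) :
    gfun m = fun t ↦ log (twoPointMGF ((1 + m) / 2) ((1 - m) / 2) (1 - m) (-(1 + m)) t) := by
  funext t
  rw [gfun, twoPointMGF, mul_neg]

theorem half_one_add_pos_and_half_one_sub_pos (hm : m ∈ Ioo (-1 : ℝ) 1) :
    0 < (1 + m) / 2 ∧ 0 < (1 - m) / 2 :=
  ⟨by linarith [hm.1], by linarith [hm.2]⟩

theorem hasDerivAt_gfun_s14 (hm : m ∈ Ioo (-1 : ℝ) 1) (t : ℝ) :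
    HasDerivAt (gfun m)
      (twoPointMGF ((1 + m) / 2 * (1 - m)) ((1 - m) / 2 * -(1 + m)) (1 - m) (-(1 + m)) t /
        twoPointMGF ((1 + m) / 2) ((1 - m) / 2) (1 - m) (-(1 + m)) t) t := by
  obtain ⟨hp, hq⟩ := half_one_add_pos_and_half_one_sub_pos hm
  rw [gfun_eq_log_twoPointMGF]
  exact hasDerivAt_log_twoPointMGF hp hq _ _ t

theorem hasDerivAt_deriv_gfun (hm : m ∈ Ioo (-1 : ℝ) 1) (t : ℝ) :
    HasDerivAt (deriv (gfun m))
      ((1 + m) / 2 * ((1 - m) / 2) * (1 - m - -(1 + m)) ^ 2 *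
        (exp (t * (1 - m)) * exp (t * -(1 + m))) /
          twoPointMGF ((1 + m) / 2) ((1 - m) / 2) (1 - m) (-(1 + m)) t ^ 2) t := by
  obtain ⟨hp, hq⟩ := half_one_add_pos_and_half_one_sub_pos hm
  rw [funext fun s ↦ (hasDerivAt_gfun_s14 hm s).deriv]
  exact hasDerivAt_twoPointMGF_div hp hq _ _ t

theorem differentiable_gfun (hm : m ∈ Ioo (-1 : ℝ) 1) : Differentiable ℝ (gfun m) :=
  fun t ↦ (hasDerivAt_gfun_s14 hm t).differentiableAt

theorem differentiable_deriv_gfun (hm : m ∈ Ioo (-1 : ℝ) 1) :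
    Differentiable ℝ (deriv (gfun m)) :=
  fun t ↦ (hasDerivAt_deriv_gfun hm t).differentiableAt

theorem deriv_gfun_zero (hm : m ∈ Ioo (-1 : ℝ) 1) : deriv (gfun m) 0 = 0 := by
  rw [(hasDerivAt_gfun_s14 hm 0).deriv, div_eq_zero_iff]
  left
  simp only [twoPointMGF, zero_mul, exp_zero]
  ring

theorem deriv_deriv_gfun_pos (hm : m ∈ Ioo (-1 : ℝ) 1) (t : ℝ) :
    0 < deriv (deriv (gfun m)) t := by
  obtain ⟨hp, hq⟩ := half_one_add_pos_and_half_one_sub_pos hm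
  have hMGF := twoPointMGF_pos hp hq (1 - m) (-(1 + m)) t
  have hgap : 0 < 1 - m - -(1 + m) := by linarith
  rw [(hasDerivAt_deriv_gfun hm t).deriv]
  positivity

variable {n : ℕ} {h : Fin n → ℝ}

theorem hasDerivAt_Mn (hm : m ∈ Ioo (-1 : ℝ) 1) (h : Fin n → ℝ) (t : ℝ) :
    HasDerivAt (Mn m h) (∑ i, h i * deriv (gfun m) (t * h i)) t := by
  have hsum := hasDerivAt_sum_mul_comp_mul Finset.univ (fun _ ↦ 1) h (t := t)
    fun i _ ↦ differentiable_gfun hm (t * h i)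
  simp only [one_mul] at hsum
  exact hsum

theorem hasDerivAt_deriv_Mn (hm : m ∈ Ioo (-1 : ℝ) 1) (h : Fin n → ℝ) (t : ℝ) :
    HasDerivAt (deriv (Mn m h)) (∑ i, h i * h i * deriv (deriv (gfun m)) (t * h i)) t := by
  rw [funext fun s ↦ (hasDerivAt_Mn hm h s).deriv]
  exact hasDerivAt_sum_mul_comp_mul Finset.univ h h
    fun i _ ↦ differentiable_deriv_gfun hm (t * h i)

theorem differentiable_Mn (hm : m ∈ Ioo (-1 : ℝ) 1) (h : Fin n → ℝ) :
    Differentiable ℝ (Mn m h) :=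
  fun t ↦ (hasDerivAt_Mn hm h t).differentiableAt

theorem deriv_Mn_zero (hm : m ∈ Ioo (-1 : ℝ) 1) (h : Fin n → ℝ) : deriv (Mn m h) 0 = 0 := by
  simp [(hasDerivAt_Mn hm h 0).deriv, deriv_gfun_zero hm]

theorem ne_zero_of_deriv_Mn_ne_zero {t : ℝ} (ht : deriv (Mn m h) t ≠ 0) : h ≠ 0 := by
  rintro rfl
  apply ht
  have hconst : Mn m (0 : Fin n → ℝ) = fun _ ↦ ∑ _i : Fin n, gfun m 0 := by
    funext s
    simp only [Mn, Pi.zero_apply, mul_zero]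
  rw [hconst, deriv_const]

theorem deriv_deriv_Mn_nonneg (hm : m ∈ Ioo (-1 : ℝ) 1) (h : Fin n → ℝ) (t : ℝ) :
    0 ≤ deriv (deriv (Mn m h)) t := by
  rw [(hasDerivAt_deriv_Mn hm h t).deriv]
  exact Finset.sum_nonneg fun i _ ↦
    mul_nonneg (mul_self_nonneg (h i)) (deriv_deriv_gfun_pos hm _).le

theorem deriv_deriv_Mn_pos (hm : m ∈ Ioo (-1 : ℝ) 1) (hh : h ≠ 0) (t : ℝ) :
    0 < deriv (deriv (Mn m h)) t := by
  rw [(hasDerivAt_deriv_Mn hm h t).deriv]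
  obtain ⟨i, hi⟩ := Function.ne_iff.mp hh
  exact Finset.sum_pos'
    (fun j _ ↦ mul_nonneg (mul_self_nonneg (h j)) (deriv_deriv_gfun_pos hm _).le)
    ⟨i, Finset.mem_univ i, mul_pos (mul_self_pos.mpr hi) (deriv_deriv_gfun_pos hm _)⟩

theorem strictMono_deriv_Mn (hm : m ∈ Ioo (-1 : ℝ) 1) (hh : h ≠ 0) :
    StrictMono (deriv (Mn m h)) :=
  strictMono_of_deriv_pos (deriv_deriv_Mn_pos hm hh)

theorem convexOn_Mn (hm : m ∈ Ioo (-1 : ℝ) 1) (h : Fin n → ℝ) : ConvexOn ℝ univ (Mn m h) :=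
  convexOn_univ_of_deriv2_nonneg (differentiable_Mn hm h)
    (fun t ↦ (hasDerivAt_deriv_Mn hm h t).differentiableAt) (deriv_deriv_Mn_nonneg hm h)

theorem MstarN_eq_legendreTransform (m : ℝ) (h : Fin n → ℝ) :
    MstarN m h = legendreTransform (Mn m h) :=
  rfl

theorem mul_deriv_sub_le_MstarN_sub (hm : m ∈ Ioo (-1 : ℝ) 1) (h : Fin n → ℝ) (s t : ℝ) :
    s * (deriv (Mn m h) t - deriv (Mn m h) s) ≤
      MstarN m h (deriv (Mn m h) t) - MstarN m h (deriv (Mn m h) s) := by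
  rw [MstarN_eq_legendreTransform]
  exact mul_deriv_sub_le_legendreTransform_sub (convexOn_Mn hm h)
    (differentiable_Mn hm h s) (differentiable_Mn hm h t)

end CumulantGeneratingFunction

theorem sqrt_div_mul_exp_neg_div_sqrt {u v l : ℝ} (hu : 0 < u) (hv : 0 < v) (hl : l ≠ 0)
    (E : ℝ) :
    √(v / u) * l * (exp (-E) / (l * √(2 * π * v))) = exp (-E - 1 / 2 * log (2 * π * u)) := by
  have hexp : exp (1 / 2 * log (2 * π * u)) = √(2 * π * u) := by
    rw [one_div_mul_eq_div, ← log_sqrt (by positivity), exp_log (by positivity)]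
  rw [exp_sub, hexp, sqrt_div hv.le, sqrt_mul (by positivity) v, sqrt_mul (by positivity) u]
  field_simp

theorem stmt14_general {m : ℝ} (hm : m ∈ Ioo (-1 : ℝ) 1) {n : ℕ} {h : Fin n → ℝ} {Lam : ℝ → ℝ}
    {x C Atil Ltil Ltilx : ℝ}
    (hLam : deriv (Mn m h) (Lam (Atil + x)) = Atil + x)
    (hAx : Atil + x ≠ 0)
    (hsys1 : MstarN m h Atil + 1 / 2 * log (2 * π * deriv (deriv (Mn m h)) Ltil) = C)
    (hsys2 : deriv (Mn m h) Ltil = Atil)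
    (hsys3 : deriv (Mn m h) Ltilx = Atil + x) :
    √(deriv (deriv (Mn m h)) Ltilx / deriv (deriv (Mn m h)) Ltil) * Ltilx *
        Jn m h Lam (Atil + x) ≤ exp (-C - Ltil * x) ∧
    exp (-C - Ltilx * x) ≤
      √(deriv (deriv (Mn m h)) Ltilx / deriv (deriv (Mn m h)) Ltil) * Ltilx *
        Jn m h Lam (Atil + x) := by
  have hh : h ≠ 0 := ne_zero_of_deriv_Mn_ne_zero (hsys3 ▸ hAx)
  have hLam_eq : Lam (Atil + x) = Ltilx :=
    (strictMono_deriv_Mn hm hh).injective (hLam.trans hsys3.symm)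
  have hLtilx : Ltilx ≠ 0 := by
    rintro rfl
    exact hAx (hsys3.symm.trans (deriv_Mn_zero hm h))
  have hsubgrad_Ltil := mul_deriv_sub_le_MstarN_sub hm h Ltil Ltilx
  have hsubgrad_Ltilx := mul_deriv_sub_le_MstarN_sub hm h Ltilx Ltil
  rw [hsys2, hsys3] at hsubgrad_Ltil hsubgrad_Ltilx
  rw [Jn, hLam_eq, sqrt_div_mul_exp_neg_div_sqrt (deriv_deriv_Mn_pos hm hh Ltil)
    (deriv_deriv_Mn_pos hm hh Ltilx) hLtilx, exp_le_exp, exp_le_exp]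
  constructor <;> linarith

/-- the deterministic core of the sharp large deviation bounds.  If
`(Ã, Λ̃, Λ̃ˣ)` solves the system `M*_n(h,Ã) + ½ log(2π M''_n(h,Λ̃)) = C`, `M'_n(h,Λ̃) = Ã`,
`M'_n(h,Λ̃ˣ) = Ã + x`, then `√(M''(Λ̃ˣ)/M''(Λ̃)) Λ̃ˣ J_n(h,Ã+x)` lies between
`e^{−C−Λ̃ˣx}` and `e^{−C−Λ̃x}`. -/
theorem stmt14 (m : ℝ) (hm : m ∈ Set.Ioo (-1 : ℝ) 1) (n : ℕ) (h : Fin n → ℝ)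
    (hne : h ≠ 0) (Lam : ℝ → ℝ)
    (hLam : ∀ a ∈ Set.Ico 0 (SigmaN m h), 0 ≤ Lam a ∧ deriv (Mn m h) (Lam a) = a)
    (x C Atil Ltil Ltilx : ℝ)
    (hAmem : Atil ∈ Set.Ioo 0 (SigmaN m h))
    (hAxmem : Atil + x ∈ Set.Ioo 0 (SigmaN m h))
    (hsys1 : MstarN m h Atil +
      1/2 * Real.log (2 * π * deriv (deriv (Mn m h)) Ltil) = C)
    (hsys2 : deriv (Mn m h) Ltil = Atil)
    (hsys3 : deriv (Mn m h) Ltilx = Atil + x) :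
    Real.sqrt (deriv (deriv (Mn m h)) Ltilx / deriv (deriv (Mn m h)) Ltil) *
        Ltilx * Jn m h Lam (Atil + x) ≤ Real.exp (-C - Ltil * x) ∧
    Real.exp (-C - Ltilx * x) ≤
      Real.sqrt (deriv (deriv (Mn m h)) Ltilx / deriv (deriv (Mn m h)) Ltil) *
        Ltilx * Jn m h Lam (Atil + x) := by
  exact stmt14_general hm (hLam _ ⟨hAxmem.1.le, hAxmem.2⟩).2 hAxmem.1.ne' hsys1 hsys2 hsys3
end
end
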